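/- (Remark 4: exact ID capacity region of the three-receiver BC when no receiver is much more capable.) If the three-receiver BC W(y₁,y₂,y₃|x) satisfies, for every PMF P on 𝒳, the inequality 2·max_{k∈{1,2,3}} I(P, W_k) ≤ Σ_{l∈{1,2,3}} I(P, W_l), then its ID capacity region 𝒞₃ equals the set of all rate triples (R₁, R₂, R₃) ∈ [0,∞)³ for which there exists a PMF P on 𝒳 with R_k ≤ I(P, W_k) for all k ∈ {1,2,3}. -/

import Mathlib

open scoped Classical
open Finset

noncomputable section

/-- `P` is a probability mass function on the finite type `X`. -/
def IsPMF {X : Type*} [Fintype X] (P : X → ℝ) : Prop :=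
  (∀ x, 0 ≤ P x) ∧ ∑ x, P x = 1

/-- `W` is a (discrete memoryless) channel from `X` to `Y`. -/
def IsChannel {X Y : Type*} [Fintype Y] (W : X → Y → ℝ) : Prop :=
  (∀ x y, 0 ≤ W x y) ∧ ∀ x, ∑ y, W x y = 1

/-- The `n`-fold memoryless extension `W^n(𝐲|𝐱) = ∏ᵢ W(yᵢ|xᵢ)`. -/
def Wn {X Y : Type*} (W : X → Y → ℝ) (n : ℕ) (x : Fin n → X) (y : Fin n → Y) : ℝ :=
  ∏ i, W (x i) (y i)

/-- Mutual information `I(P,W)` (natural logarithm), with the convention that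
terms with `P x * W x y = 0` contribute `0`. -/
def mutInf {X Y : Type*} [Fintype X] [Fintype Y] (P : X → ℝ) (W : X → Y → ℝ) : ℝ :=
  ∑ x, ∑ y, if P x * W x y = 0 then 0
    else P x * W x y * Real.log (W x y / ∑ x', P x' * W x' y)

/-- The error requirements of an `(n, M, l1, l2)` ID code for the DMC `W`:
maximum probability of missed identification at most `l1`, maximum probability
of wrong identification at most `l2`. -/
def IDCodeErr {X Y M : Type*} [Fintype X] [Fintype Y]
    (n : ℕ) (W : X → Y → ℝ) (Q : M → (Fin n → X) → ℝ)
    (D : M → Finset (Fin n → Y)) (l1 l2 : ℝ) : Prop :=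
  (∀ m, ∑ x, Q m x * ∑ y ∈ (D m)ᶜ, Wn W n x y ≤ l1) ∧
  (∀ m m', m ≠ m' → ∑ x, Q m x * ∑ y ∈ D m', Wn W n x y ≤ l2)

/-- `(n, M, l1, l2)` ID code for the DMC `W`. -/
def IsIDCode {X Y M : Type*} [Fintype X] [Fintype Y]
    (n : ℕ) (W : X → Y → ℝ) (Q : M → (Fin n → X) → ℝ)
    (D : M → Finset (Fin n → Y)) (l1 l2 : ℝ) : Prop :=
  (∀ m, IsPMF (Q m)) ∧ IDCodeErr n W Q D l1 l2

/-- `W` is a three-receiver broadcast channel from `X` to `Y1 × Y2 × Y3`. -/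
def IsBC3 {X Y1 Y2 Y3 : Type*} [Fintype Y1] [Fintype Y2] [Fintype Y3]
    (W : X → Y1 → Y2 → Y3 → ℝ) : Prop :=
  (∀ x y1 y2 y3, 0 ≤ W x y1 y2 y3) ∧ ∀ x, ∑ y1, ∑ y2, ∑ y3, W x y1 y2 y3 = 1

/-- Marginal channel to receiver 1. -/
def marg1 {X Y1 Y2 Y3 : Type*} [Fintype Y2] [Fintype Y3]
    (W : X → Y1 → Y2 → Y3 → ℝ) : X → Y1 → ℝ :=
  fun x y1 => ∑ y2, ∑ y3, W x y1 y2 y3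

/-- Marginal channel to receiver 2. -/
def marg2 {X Y1 Y2 Y3 : Type*} [Fintype Y1] [Fintype Y3]
    (W : X → Y1 → Y2 → Y3 → ℝ) : X → Y2 → ℝ :=
  fun x y2 => ∑ y1, ∑ y3, W x y1 y2 y3

/-- Marginal channel to receiver 3. -/
def marg3 {X Y1 Y2 Y3 : Type*} [Fintype Y1] [Fintype Y2]
    (W : X → Y1 → Y2 → Y3 → ℝ) : X → Y3 → ℝ :=
  fun x y3 => ∑ y1, ∑ y2, W x y1 y2 y3

/-- Average-error ID code for the three-receiver BC: every `Q m1 m2 m3` is a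
PMF on `Xⁿ`, and for each receiver `k` the mixtures (averaging uniformly over
the other two messages) form an ID code for the marginal channel `W_k`. -/
def IsBC3IDCode {X Y1 Y2 Y3 : Type*}
    [Fintype X] [Fintype Y1] [Fintype Y2] [Fintype Y3]
    (n k1 k2 k3 : ℕ) (W : X → Y1 → Y2 → Y3 → ℝ)
    (Q : Fin k1 → Fin k2 → Fin k3 → (Fin n → X) → ℝ)
    (D1 : Fin k1 → Finset (Fin n → Y1))
    (D2 : Fin k2 → Finset (Fin n → Y2))
    (D3 : Fin k3 → Finset (Fin n → Y3))
    (l11 l21 l12 l22 l13 l23 : ℝ) : Prop :=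
  (∀ m1 m2 m3, IsPMF (Q m1 m2 m3)) ∧
  IDCodeErr n (marg1 W)
    (fun m1 x => ((k2 * k3 : ℕ) : ℝ)⁻¹ * ∑ m2, ∑ m3, Q m1 m2 m3 x) D1 l11 l21 ∧
  IDCodeErr n (marg2 W)
    (fun m2 x => ((k1 * k3 : ℕ) : ℝ)⁻¹ * ∑ m1, ∑ m3, Q m1 m2 m3 x) D2 l12 l22 ∧
  IDCodeErr n (marg3 W)
    (fun m3 x => ((k1 * k2 : ℕ) : ℝ)⁻¹ * ∑ m1, ∑ m2, Q m1 m2 m3 x) D3 l13 l23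

/-- A rate triple is achievable for the three-receiver BC `W` under the
average-error criterion. -/
def BC3Achievable {X Y1 Y2 Y3 : Type*}
    [Fintype X] [Fintype Y1] [Fintype Y2] [Fintype Y3]
    (W : X → Y1 → Y2 → Y3 → ℝ) (Rt : ℝ × ℝ × ℝ) : Prop :=
  0 ≤ Rt.1 ∧ 0 ≤ Rt.2.1 ∧ 0 ≤ Rt.2.2 ∧
  ∀ l11 l21 l12 l22 l13 l23 : ℝ,
    0 < l11 → 0 < l21 → 0 < l12 → 0 < l22 → 0 < l13 → 0 < l23 →
    ∃ n₀ : ℕ, ∀ n : ℕ, n₀ ≤ n →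
      ∃ (k1 k2 k3 : ℕ) (Q : Fin k1 → Fin k2 → Fin k3 → (Fin n → X) → ℝ)
        (D1 : Fin k1 → Finset (Fin n → Y1))
        (D2 : Fin k2 → Finset (Fin n → Y2))
        (D3 : Fin k3 → Finset (Fin n → Y3)),
        IsBC3IDCode n k1 k2 k3 W Q D1 D2 D3 l11 l21 l12 l22 l13 l23 ∧
        ((0 < Rt.1 → Rt.1 ≤ (1 / n) * Real.log (Real.log k1)) ∧ (Rt.1 = 0 → k1 = 1)) ∧
        ((0 < Rt.2.1 → Rt.2.1 ≤ (1 / n) * Real.log (Real.log k2)) ∧ (Rt.2.1 = 0 → k2 = 1)) ∧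
        ((0 < Rt.2.2 → Rt.2.2 ≤ (1 / n) * Real.log (Real.log k3)) ∧ (Rt.2.2 = 0 → k3 = 1))

/-- Summing a product of coordinate functions over all tuples. -/
theorem sum_pi_prod {ι A : Type*} [Fintype ι] [DecidableEq ι] [Fintype A] (f : ι → A → ℝ) :
    ∑ c : ι → A, ∏ i, f i (c i) = ∏ i, ∑ a, f i a := by
  rw [Finset.prod_univ_sum, Fintype.piFinset_univ]

theorem IsPMF.pi {ι A : Type*} [Fintype ι] [DecidableEq ι] [Fintype A] {p : ι → A → ℝ}
    (hp : ∀ i, IsPMF (p i)) : IsPMF (fun c : ι → A => ∏ i, p i (c i)) :=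
  ⟨fun c => Finset.prod_nonneg fun i _ => (hp i).1 _, by
    rw [sum_pi_prod]; exact Finset.prod_eq_one fun i _ => (hp i).2⟩

/-- One-coordinate expectation under a product distribution. -/
theorem sum_pi_mul {ι A : Type*} [Fintype ι] [DecidableEq ι] [Fintype A] {p : ι → A → ℝ}
    (hp : ∀ i, IsPMF (p i)) (h : A → ℝ) (i : ι) :
    ∑ c : ι → A, (∏ l, p l (c l)) * h (c i) = ∑ a, p i a * h a := by
  have key : ∀ c : ι → A, (∏ l, p l (c l)) * h (c i)
      = ∏ l, (p l (c l) * (if l = i then h (c l) else 1)) := by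
    intro c
    rw [Finset.prod_mul_distrib]
    simp
  simp_rw [key]
  rw [sum_pi_prod (fun l a => p l a * (if l = i then h a else 1)), Finset.prod_eq_single i]
  · simp
  · intro b _ hb
    simp [hb, (hp b).2]
  · simp

/-- Two-coordinate expectation under a product distribution. -/
theorem sum_pi_mul_mul {ι A : Type*} [Fintype ι] [DecidableEq ι] [Fintype A] {p : ι → A → ℝ}
    (hp : ∀ i, IsPMF (p i)) (h : ι → A → ℝ) (hh : ∀ i, ∑ a, p i a * h i a = 0) (i j : ι) :
    ∑ c : ι → A, (∏ l, p l (c l)) * (h i (c i) * h j (c j))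
      = if i = j then ∑ a, p i a * h i a ^ 2 else 0 := by
  have key : ∀ c : ι → A, (∏ l, p l (c l)) * (h i (c i) * h j (c j))
      = ∏ l, (p l (c l) * ((if l = i then h i (c l) else 1) *
        (if l = j then h j (c l) else 1))) := by
    intro c
    rw [Finset.prod_mul_distrib, Finset.prod_mul_distrib]
    simp
  simp_rw [key]
  rw [sum_pi_prod (fun l a => p l a * ((if l = i then h i a else 1) *
    (if l = j then h j a else 1)))]
  split_ifs with hij
  · subst hij
    rw [Finset.prod_eq_single i]
    · simp [pow_two]
    · intro b _ hb
      simp [hb, (hp b).2]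
    · simp
  · apply Finset.prod_eq_zero (Finset.mem_univ i)
    simp [hij, hh]

/-- The variance of a sum of independent centred variables is the sum of the variances. -/
theorem sum_pi_sq {ι A : Type*} [Fintype ι] [DecidableEq ι] [Fintype A] {p : ι → A → ℝ}
    (hp : ∀ i, IsPMF (p i)) (h : ι → A → ℝ) (hh : ∀ i, ∑ a, p i a * h i a = 0) :
    ∑ c : ι → A, (∏ l, p l (c l)) * (∑ i, h i (c i)) ^ 2 = ∑ i, ∑ a, p i a * h i a ^ 2 := by
  have : ∀ c : ι → A, (∏ l, p l (c l)) * (∑ i, h i (c i)) ^ 2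
      = ∑ i, ∑ j, (∏ l, p l (c l)) * (h i (c i) * h j (c j)) := by
    intro c
    rw [pow_two, Finset.sum_mul_sum, Finset.mul_sum]
    simp_rw [Finset.mul_sum]
  simp_rw [this]
  rw [Finset.sum_comm]
  refine Finset.sum_congr rfl fun i _ => ?_
  rw [Finset.sum_comm]
  simp_rw [sum_pi_mul_mul hp h hh]
  simp

/-- The variance is at most the second moment. -/
theorem IsPMF.variance_le {A : Type*} [Fintype A] {p : A → ℝ} (hp : IsPMF p) (g : A → ℝ) :
    ∑ a, p a * (g a - ∑ b, p b * g b) ^ 2 ≤ ∑ a, p a * g a ^ 2 := by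
  have key : ∀ μ : ℝ, ∑ a, p a * (g a - μ) ^ 2
      = ∑ a, p a * g a ^ 2 - 2 * μ * (∑ a, p a * g a) + μ ^ 2 * ∑ a, p a := by
    intro μ
    simp only [Finset.mul_sum (Finset.univ : Finset A)]
    rw [← Finset.sum_sub_distrib, ← Finset.sum_add_distrib]
    exact Finset.sum_congr rfl fun a _ => by ring
  rw [key, hp.2]
  nlinarith [sq_nonneg (∑ b, p b * g b)]

theorem IsPMF.sum_mul_sub_mean {A : Type*} [Fintype A] {p : A → ℝ} (hp : IsPMF p) (g : A → ℝ) :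
    ∑ a, p a * (g a - ∑ b, p b * g b) = 0 := by
  simp_rw [mul_sub]
  rw [Finset.sum_sub_distrib, ← Finset.sum_mul, hp.2]
  simp

/-- Chebyshev's inequality for a weighted finite sum. -/
theorem sum_filter_le_of_sq {C : Type*} [Fintype C] {w : C → ℝ} (hw : ∀ c, 0 ≤ w c) (z : C → ℝ)
    {t : ℝ} (ht : 0 < t) :
    ∑ c with t ≤ |z c|, w c ≤ (∑ c, w c * z c ^ 2) / t ^ 2 := by
  rw [le_div_iff₀ (by positivity), Finset.sum_mul]
  calc ∑ c with t ≤ |z c|, w c * t ^ 2 ≤ ∑ c with t ≤ |z c|, w c * z c ^ 2 := by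
        refine Finset.sum_le_sum fun c hc => mul_le_mul_of_nonneg_left ?_ (hw c)
        rw [← sq_abs (z c)]
        exact pow_le_pow_left₀ ht.le (Finset.mem_filter.1 hc).2 2
    _ ≤ ∑ c, w c * z c ^ 2 :=
        Finset.sum_le_sum_of_subset_of_nonneg (Finset.filter_subset _ _)
          fun c _ _ => mul_nonneg (hw c) (sq_nonneg _)

/-- Weak law of large numbers for independent, not necessarily identically distributed variables. -/
theorem sum_pi_chebyshev {ι A : Type*} [Fintype ι] [DecidableEq ι] [Fintype A] {p : ι → A → ℝ}
    (hp : ∀ i, IsPMF (p i)) (g : ι → A → ℝ) {t : ℝ} (ht : 0 < t) :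
    ∑ c : ι → A with t ≤ |∑ i, g i (c i) - ∑ i, ∑ a, p i a * g i a|, ∏ l, p l (c l)
      ≤ (∑ i, ∑ a, p i a * g i a ^ 2) / t ^ 2 := by
  refine (sum_filter_le_of_sq (IsPMF.pi hp).1 _ ht).trans ?_
  gcongr
  simp_rw [← Finset.sum_sub_distrib]
  rw [sum_pi_sq hp (fun i a => g i a - ∑ b, p i b * g i b) fun i => (hp i).sum_mul_sub_mean _]
  exact Finset.sum_le_sum fun i _ => (hp i).variance_le _

/-- The mean absolute value is at most the root mean square. -/
theorem IsPMF.sum_mul_abs_le_sqrt {A : Type*} [Fintype A] {p : A → ℝ} (hp : IsPMF p) (z : A → ℝ) :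
    ∑ a, p a * |z a| ≤ Real.sqrt (∑ a, p a * z a ^ 2) := by
  apply Real.le_sqrt_of_sq_le
  have := (even_two.convexOn_pow (𝕜 := ℝ)).map_sum_le (t := Finset.univ) (w := p)
    (p := fun a => |z a|) (fun a _ => hp.1 a) hp.2 (fun _ _ => Set.mem_univ _)
  simpa using this

/-- If a mean is below a bound, so is some value taken with positive probability. -/
theorem IsPMF.exists_lt_of_sum_lt {A : Type*} [Fintype A] {p : A → ℝ} (hp : IsPMF p) {f : A → ℝ}
    {r : ℝ} (h : ∑ a, p a * f a < r) : ∃ a, 0 < p a ∧ f a < r := by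
  by_contra! hcon
  have : ∑ a, p a * r ≤ ∑ a, p a * f a := by
    refine Finset.sum_le_sum fun a _ => ?_
    rcases (hp.1 a).eq_or_lt with h0 | h0
    · simp [← h0]
    · exact mul_le_mul_of_nonneg_left (hcon a h0) h0.le
  rw [← Finset.sum_mul, hp.2] at this
  linarith

theorem IsPMF.exists_le_of_sum_le {A : Type*} [Fintype A] {p : A → ℝ} (hp : IsPMF p) {f : A → ℝ}
    {r : ℝ} (h : ∑ a, p a * f a ≤ r) : ∃ a, f a ≤ r := by
  by_contra! hcon
  obtain ⟨a, ha⟩ : ∃ a, 0 < p a := by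
    by_contra! h0
    have := hp.2
    have : ∑ a, p a ≤ 0 := Finset.sum_nonpos fun a _ => h0 a
    linarith [hp.2]
  have : ∑ a, p a * r < ∑ a, p a * f a :=
    Finset.sum_lt_sum (fun a _ => mul_le_mul_of_nonneg_left (hcon a).le (hp.1 a))
      ⟨a, Finset.mem_univ _, mul_lt_mul_of_pos_left (hcon a) ha⟩
  rw [← Finset.sum_mul, hp.2] at this
  linarith

theorem IsBC3.isChannel_marg1 {X Y1 Y2 Y3 : Type*} [Fintype Y1] [Fintype Y2] [Fintype Y3]
    {W : X → Y1 → Y2 → Y3 → ℝ} (hW : IsBC3 W) : IsChannel (marg1 W) :=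
  ⟨fun x _ => Finset.sum_nonneg fun _ _ => Finset.sum_nonneg fun _ _ => hW.1 x _ _ _, hW.2⟩

theorem IsBC3.isChannel_marg2 {X Y1 Y2 Y3 : Type*} [Fintype Y1] [Fintype Y2] [Fintype Y3]
    {W : X → Y1 → Y2 → Y3 → ℝ} (hW : IsBC3 W) : IsChannel (marg2 W) := by
  refine ⟨fun x _ => Finset.sum_nonneg fun _ _ => Finset.sum_nonneg fun _ _ => hW.1 x _ _ _,
    fun x => ?_⟩
  rw [← hW.2 x]
  exact Finset.sum_comm

theorem IsBC3.isChannel_marg3 {X Y1 Y2 Y3 : Type*} [Fintype Y1] [Fintype Y2] [Fintype Y3]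
    {W : X → Y1 → Y2 → Y3 → ℝ} (hW : IsBC3 W) : IsChannel (marg3 W) := by
  refine ⟨fun x _ => Finset.sum_nonneg fun _ _ => Finset.sum_nonneg fun _ _ => hW.1 x _ _ _,
    fun x => ?_⟩
  rw [← hW.2 x]
  simp only [marg3]
  rw [Finset.sum_comm]
  refine Finset.sum_congr rfl fun y1 _ => ?_
  rw [Finset.sum_comm]

/-- The output law of a channel `W` under the input law `P`. -/
def outLaw {X Y : Type*} [Fintype X] (P : X → ℝ) (W : X → Y → ℝ) (y : Y) : ℝ :=
  ∑ x, P x * W x y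

theorem IsPMF.outLaw {X Y : Type*} [Fintype X] [Fintype Y] {P : X → ℝ} (hP : IsPMF P)
    {W : X → Y → ℝ} (hW : IsChannel W) : IsPMF (outLaw P W) := by
  refine ⟨fun y => Finset.sum_nonneg fun x _ => mul_nonneg (hP.1 x) (hW.1 x y), ?_⟩
  unfold _root_.outLaw
  rw [Finset.sum_comm]
  simp_rw [← Finset.mul_sum, hW.2, mul_one, hP.2]

theorem mul_le_outLaw {X Y : Type*} [Fintype X] {P : X → ℝ} (hP : ∀ x, 0 ≤ P x)
    {W : X → Y → ℝ} (hW : ∀ x y, 0 ≤ W x y) (x : X) (y : Y) : P x * W x y ≤ outLaw P W y :=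
  Finset.single_le_sum (f := fun x => P x * W x y) (fun x _ => mul_nonneg (hP x) (hW x y))
    (Finset.mem_univ x)

theorem IsPMF.le_one {A : Type*} [Fintype A] {p : A → ℝ} (hp : IsPMF p) (a : A) : p a ≤ 1 := by
  rw [← hp.2]
  exact Finset.single_le_sum (fun x _ => hp.1 x) (Finset.mem_univ a)

theorem IsChannel.isPMF {X Y : Type*} [Fintype Y] {W : X → Y → ℝ} (hW : IsChannel W) (x : X) :
    IsPMF (W x) := ⟨hW.1 x, hW.2 x⟩

theorem IsChannel.Wn {X Y : Type*} [Fintype Y] {W : X → Y → ℝ} (hW : IsChannel W) (n : ℕ) :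
    IsChannel (Wn W n) :=
  ⟨fun x => (IsPMF.pi fun i => hW.isPMF (x i)).1, fun x => (IsPMF.pi fun i => hW.isPMF (x i)).2⟩

theorem mutInf_eq_sum_log {X Y : Type*} [Fintype X] [Fintype Y] (P : X → ℝ) (W : X → Y → ℝ) :
    mutInf P W = ∑ x, P x * ∑ y, W x y * Real.log (W x y / outLaw P W y) := by
  unfold mutInf outLaw
  refine Finset.sum_congr rfl fun x _ => ?_
  rw [Finset.mul_sum]
  refine Finset.sum_congr rfl fun y _ => ?_
  split_ifs with h
  · rw [← mul_assoc, h, zero_mul]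
  · rw [mul_assoc]

theorem mutInf_eq_negMulLog {X Y : Type*} [Fintype X] [Fintype Y] {P : X → ℝ} (hP : IsPMF P)
    {W : X → Y → ℝ} (hW : IsChannel W) :
    mutInf P W = ∑ y, (Real.negMulLog (outLaw P W y) - ∑ x, P x * Real.negMulLog (W x y)) := by
  have h : ∀ x y, P x * (W x y * Real.log (W x y / outLaw P W y))
      = P x * W x y * (-Real.log (outLaw P W y)) - P x * Real.negMulLog (W x y) := by
    intro x y
    by_cases h0 : P x * W x y = 0
    · rcases mul_eq_zero.1 h0 with h1 | h1 <;> simp [h1]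
    · have hq : outLaw P W y ≠ 0 := by
        have h1 := mul_le_outLaw hP.1 hW.1 x y
        have h2 : 0 < P x * W x y := lt_of_le_of_ne (mul_nonneg (hP.1 x) (hW.1 x y)) (Ne.symm h0)
        linarith
      rw [Real.log_div (right_ne_zero_of_mul h0) hq, Real.negMulLog]
      ring
  rw [mutInf_eq_sum_log]
  simp_rw [Finset.mul_sum]
  rw [Finset.sum_comm]
  refine Finset.sum_congr rfl fun y _ => ?_
  simp_rw [h]
  rw [Finset.sum_sub_distrib, ← Finset.sum_mul]
  simp only [Real.negMulLog, outLaw]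
  ring

theorem mutInf_nonneg {X Y : Type*} [Fintype X] [Fintype Y] {P : X → ℝ} (hP : IsPMF P)
    {W : X → Y → ℝ} (hW : IsChannel W) : 0 ≤ mutInf P W := by
  rw [mutInf_eq_negMulLog hP hW]
  refine Finset.sum_nonneg fun y _ => sub_nonneg.2 ?_
  have := Real.concaveOn_negMulLog.le_map_sum (t := Finset.univ) (w := P) (p := fun x => W x y)
    (fun x _ => hP.1 x) hP.2 (fun x _ => hW.1 x y)
  simpa [outLaw] using this

theorem continuousOn_mutInf {X Y : Type*} [Fintype X] [Fintype Y] {W : X → Y → ℝ}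
    (hW : IsChannel W) : ContinuousOn (fun P => mutInf P W) {P : X → ℝ | IsPMF P} := by
  have : Continuous fun P : X → ℝ =>
      ∑ y, (Real.negMulLog (outLaw P W y) - ∑ x, P x * Real.negMulLog (W x y)) := by
    unfold outLaw
    refine continuous_finsetSum _ fun y _ => Continuous.sub ?_ (by fun_prop)
    exact Real.continuous_negMulLog.comp (by fun_prop)
  exact this.continuousOn.congr fun P hP => mutInf_eq_negMulLog hP hW

theorem isCompact_isPMF (X : Type*) [Fintype X] : IsCompact {P : X → ℝ | IsPMF P} := by
  have : {P : X → ℝ | IsPMF P} = stdSimplex ℝ X := rfl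
  rw [this]
  exact isCompact_stdSimplex ℝ X

theorem mul_log_sq_le {t : ℝ} (h0 : 0 ≤ t) (h1 : t ≤ 1) : t * Real.log t ^ 2 ≤ 4 := by
  rcases h0.eq_or_lt with rfl | h0
  · simp
  have hs : 0 < Real.sqrt t := Real.sqrt_pos.2 h0
  have h2 := Real.abs_log_mul_self_lt _ hs (Real.sqrt_le_one.2 h1)
  have h3 : (Real.log (Real.sqrt t) * Real.sqrt t) ^ 2 ≤ 1 := by
    rw [← sq_abs]; exact pow_le_one₀ (abs_nonneg _) h2.le
  rw [Real.log_sqrt h0.le, mul_pow, Real.sq_sqrt h0.le] at h3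
  nlinarith

/-- The second moment of the information density is bounded uniformly in the input law. -/
theorem sum_log_sq_le {X Y : Type*} [Fintype X] [Fintype Y] {P : X → ℝ} (hP : IsPMF P)
    {W : X → Y → ℝ} (hW : IsChannel W) :
    ∑ x, P x * ∑ y, W x y * Real.log (W x y / outLaw P W y) ^ 2
      ≤ 8 * (Fintype.card X * Fintype.card Y) := by
  have key : ∀ x y, P x * (W x y * Real.log (W x y / outLaw P W y) ^ 2) ≤ 8 := by
    intro x y
    have hp := hP.1 x
    have hp1 := hP.le_one x
    have hw := hW.1 x y
    have hw1 := (hW.isPMF x).le_one y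
    rcases hp.eq_or_lt with h | hp'
    · rw [← h]; norm_num
    rcases hw.eq_or_lt with h | hw'
    · rw [← h]; norm_num
    have hq : P x * W x y ≤ outLaw P W y := mul_le_outLaw hP.1 hW.1 x y
    have hq1 := (hP.outLaw hW).le_one y
    have hq0 : 0 < outLaw P W y := lt_of_lt_of_le (mul_pos hp' hw') hq
    have hup : Real.log (W x y / outLaw P W y) ≤ -Real.log (P x) := by
      rw [← Real.log_inv]
      apply Real.log_le_log (by positivity)
      rw [div_le_iff₀ hq0, inv_mul_eq_div, le_div_iff₀ hp']
      linarith
    have hlo : Real.log (W x y) ≤ Real.log (W x y / outLaw P W y) := by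
      apply Real.log_le_log hw'
      rw [le_div_iff₀ hq0]
      nlinarith
    have hlp : Real.log (P x) ≤ 0 := Real.log_nonpos hp hp1
    have hlw : Real.log (W x y) ≤ 0 := Real.log_nonpos hw hw1
    have hsq : Real.log (W x y / outLaw P W y) ^ 2 ≤ Real.log (P x) ^ 2 + Real.log (W x y) ^ 2 := by
      rcases le_total 0 (Real.log (W x y / outLaw P W y)) with h | h <;>
        nlinarith [sq_nonneg (Real.log (P x)), sq_nonneg (Real.log (W x y))]
    calc P x * (W x y * Real.log (W x y / outLaw P W y) ^ 2)
        ≤ P x * (W x y * (Real.log (P x) ^ 2 + Real.log (W x y) ^ 2)) := by gcongr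
      _ = W x y * (P x * Real.log (P x) ^ 2) + P x * (W x y * Real.log (W x y) ^ 2) := by ring
      _ ≤ 1 * 4 + 1 * 4 := by
        gcongr
        · exact mul_log_sq_le hp hp1
        · exact mul_log_sq_le hw hw1
      _ = 8 := by norm_num
  calc ∑ x, P x * ∑ y, W x y * Real.log (W x y / outLaw P W y) ^ 2
      ≤ ∑ _x : X, ∑ _y : Y, (8 : ℝ) := by
        simp_rw [Finset.mul_sum]
        exact Finset.sum_le_sum fun x _ => Finset.sum_le_sum fun y _ => key x y
    _ = 8 * (Fintype.card X * Fintype.card Y) := by simp; ring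

/-- Soft covering: some codebook of size `L` reproduces the output law `outLaw q V` in `L¹`. -/
theorem exists_soft_covering {A C : Type*} [Fintype A] [Fintype C] {q : A → ℝ} (hq : IsPMF q)
    {V : A → C → ℝ} (hV : IsChannel V) {θ β : ℝ} (hθ : 0 < θ)
    (hβ : ∑ x, q x * ∑ y with θ * outLaw q V y < V x y, V x y ≤ β) {L : ℕ} (hL : 0 < L) :
    ∃ c : Fin L → A, ∑ y, |(∑ l, V (c l) y) / L - outLaw q V y| ≤ Real.sqrt (θ / L) + 2 * β := by
  have hL' : (0 : ℝ) < L := by exact_mod_cast hL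
  set g : A → C → ℝ := fun x y => if θ * outLaw q V y < V x y then 0 else V x y with hg
  set b : A → C → ℝ := fun x y => if θ * outLaw q V y < V x y then V x y else 0 with hb
  have hgb : ∀ x y, V x y = g x y + b x y := by
    intro x y; simp only [hg, hb]; split_ifs <;> simp
  have hg0 : ∀ x y, 0 ≤ g x y := by
    intro x y; simp only [hg]; split_ifs; exacts [le_rfl, hV.1 x y]
  have hb0 : ∀ x y, 0 ≤ b x y := by
    intro x y; simp only [hb]; split_ifs; exacts [hV.1 x y, le_rfl]
  have hout0 : ∀ y, 0 ≤ outLaw q V y := (hq.outLaw hV).1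
  have hbβ : ∑ y, outLaw q b y ≤ β := by
    refine le_of_eq_of_le ?_ hβ
    unfold outLaw
    rw [Finset.sum_comm]
    simp only [hb, ← Finset.mul_sum, Finset.sum_filter]
    rfl
  have houtgb : ∀ y, outLaw q V y = outLaw q g y + outLaw q b y := by
    intro y
    simp only [outLaw, ← Finset.sum_add_distrib, ← mul_add, ← hgb]
  have hp : ∀ _ : Fin L, IsPMF q := fun _ => hq
  set w : (Fin L → A) → ℝ := fun c => ∏ l, q (c l) with hw
  have hwp : IsPMF w := IsPMF.pi hp
  have hbd : ∀ (c : Fin L → A) y, |(∑ l, V (c l) y) / L - outLaw q V y|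
      ≤ |(∑ l, (g (c l) y - outLaw q g y)) / L| + ((∑ l, b (c l) y) / L + outLaw q b y) := by
    intro c y
    have e : (∑ l, V (c l) y) / L - outLaw q V y
        = (∑ l, (g (c l) y - outLaw q g y)) / L + ((∑ l, b (c l) y) / L - outLaw q b y) := by
      simp only [hgb, houtgb, Finset.sum_add_distrib, Finset.sum_sub_distrib, Finset.sum_const,
        Finset.card_univ, Fintype.card_fin, nsmul_eq_mul]
      field_simp
      ring
    rw [e]
    refine (abs_add_le _ _).trans (add_le_add_right ?_ _)
    refine (abs_sub _ _).trans ?_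
    rw [abs_of_nonneg, abs_of_nonneg]
    · exact Finset.sum_nonneg fun x _ => mul_nonneg (hq.1 x) (hb0 x y)
    · exact div_nonneg (Finset.sum_nonneg fun l _ => hb0 _ _) hL'.le
  have h1 : ∀ y, ∑ c, w c * |(∑ l, (g (c l) y - outLaw q g y)) / L|
      ≤ Real.sqrt (θ / L) * outLaw q V y := by
    intro y
    refine (hwp.sum_mul_abs_le_sqrt _).trans ?_
    rw [Real.sqrt_le_left (mul_nonneg (Real.sqrt_nonneg _) (hout0 y)), mul_pow,
      Real.sq_sqrt (by positivity)]
    have e1 := sum_pi_sq hp (fun _ a => g a y - outLaw q g y) fun _ =>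
      hq.sum_mul_sub_mean (fun a => g a y)
    have e2 := hq.variance_le (fun a => g a y)
    have e3 : ∑ a, q a * g a y ^ 2 ≤ θ * outLaw q V y ^ 2 := by
      have : ∀ a, q a * g a y ^ 2 ≤ (θ * outLaw q V y) * (q a * V a y) := by
        intro a
        have : g a y ^ 2 ≤ (θ * outLaw q V y) * V a y := by
          simp only [hg]
          split_ifs with h
          · simpa using mul_nonneg (mul_nonneg hθ.le (hout0 y)) (hV.1 a y)
          · rw [pow_two]
            exact mul_le_mul_of_nonneg_right (not_lt.1 h) (hV.1 a y)
        nlinarith [hq.1 a, mul_le_mul_of_nonneg_left this (hq.1 a)]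
      refine (Finset.sum_le_sum fun a _ => this a).trans ?_
      rw [← Finset.mul_sum, pow_two, mul_assoc]
      rfl
    simp only [div_pow]
    simp only [← mul_div_assoc, ← Finset.sum_div]
    rw [e1, Finset.sum_const, Finset.card_univ, Fintype.card_fin, nsmul_eq_mul]
    have e4 := e2.trans e3
    calc (L : ℝ) * (∑ a, q a * (g a y - outLaw q g y) ^ 2) / (L : ℝ) ^ 2
        = (∑ a, q a * (g a y - outLaw q g y) ^ 2) / L := by
          field_simp
      _ ≤ (θ * outLaw q V y ^ 2) / L := by gcongr; exact e4
      _ = θ / L * outLaw q V y ^ 2 := by ring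
  have h2 : ∀ y, ∑ c, w c * ((∑ l, b (c l) y) / L + outLaw q b y) = 2 * outLaw q b y := by
    intro y
    simp_rw [mul_add]
    rw [Finset.sum_add_distrib, ← Finset.sum_mul, hwp.2]
    have : ∑ c, w c * ((∑ l, b (c l) y) / L) = outLaw q b y := by
      simp_rw [← mul_div_assoc, Finset.mul_sum]
      rw [← Finset.sum_div, Finset.sum_comm]
      rw [Finset.sum_congr rfl fun l _ => sum_pi_mul hp (fun a => b a y) l]
      rw [Finset.sum_const, Finset.card_univ, Fintype.card_fin, nsmul_eq_mul]
      rw [mul_div_cancel_left₀ _ hL'.ne']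
      rfl
    rw [this]; ring
  apply hwp.exists_le_of_sum_le
  calc ∑ c, w c * ∑ y, |(∑ l, V (c l) y) / L - outLaw q V y|
      ≤ ∑ c, w c * ∑ y, (|(∑ l, (g (c l) y - outLaw q g y)) / L|
          + ((∑ l, b (c l) y) / L + outLaw q b y)) := by
        refine Finset.sum_le_sum fun c _ => mul_le_mul_of_nonneg_left ?_ (hwp.1 c)
        exact Finset.sum_le_sum fun y _ => hbd c y
    _ = ∑ y, (∑ c, w c * |(∑ l, (g (c l) y - outLaw q g y)) / L|
          + ∑ c, w c * ((∑ l, b (c l) y) / L + outLaw q b y)) := by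
        simp_rw [Finset.mul_sum]
        rw [Finset.sum_comm]
        simp_rw [← Finset.sum_add_distrib, mul_add]
    _ ≤ ∑ y, (Real.sqrt (θ / L) * outLaw q V y + 2 * outLaw q b y) :=
        Finset.sum_le_sum fun y _ => add_le_add (h1 y) (h2 y).le
    _ ≤ Real.sqrt (θ / L) + 2 * β := by
        rw [Finset.sum_add_distrib, ← Finset.mul_sum, ← Finset.mul_sum, (hq.outLaw hV).2, mul_one]
        linarith

/-- The empirical distribution (type) of a sequence. -/
def empType {X : Type*} {n : ℕ} (x : Fin n → X) (a : X) : ℝ := (#{i | x i = a} : ℝ) / n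

theorem sum_comp_eq_empType {X : Type*} [Fintype X] {n : ℕ} (hn : 0 < n) (x : Fin n → X)
    (f : X → ℝ) : ∑ i, f (x i) = n * ∑ a, empType x a * f a := by
  have hn' : (n : ℝ) ≠ 0 := by exact_mod_cast hn.ne'
  have h : ∀ a, (n : ℝ) * (empType x a * f a) = ∑ i with x i = a, f (x i) := by
    intro a
    rw [Finset.sum_congr rfl (g := fun _ => f a) fun i hi => by rw [(Finset.mem_filter.1 hi).2]]
    rw [Finset.sum_const, nsmul_eq_mul, empType]
    field_simp
  rw [Finset.mul_sum]
  simp_rw [h]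
  exact (Finset.sum_fiberwise _ _ _).symm

theorem isPMF_empType {X : Type*} [Fintype X] {n : ℕ} (hn : 0 < n) (x : Fin n → X) :
    IsPMF (empType x) := by
  have hn' : (n : ℝ) ≠ 0 := by exact_mod_cast hn.ne'
  refine ⟨fun a => by unfold empType; positivity, ?_⟩
  have := sum_comp_eq_empType hn x fun _ => 1
  simp only [Finset.sum_const, Finset.card_univ, Fintype.card_fin, nsmul_eq_mul, mul_one] at this
  field_simp at this
  exact this.symm

/-- The number of types is polynomial in the block length. -/
theorem card_image_empType_le (X : Type*) [Fintype X] (n : ℕ) :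
    #(univ.image (empType : (Fin n → X) → X → ℝ)) ≤ (n + 1) ^ Fintype.card X := by
  let cnt : (Fin n → X) → X → Fin (n + 1) := fun x a =>
    ⟨#{i | x i = a}, Nat.lt_succ_of_le ((Finset.card_le_univ _).trans (by simp))⟩
  have h : (empType : (Fin n → X) → X → ℝ)
      = (fun (c : X → Fin (n + 1)) a => ((c a : ℕ) : ℝ) / n) ∘ cnt := rfl
  rw [h, ← Finset.image_image]
  refine Finset.card_image_le.trans ((Finset.card_le_univ _).trans ?_)
  simp

/-- Given a positive likelihood ratio, its logarithm is the sum of the information densities. -/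
theorem log_prod_div {ι : Type*} (s : Finset ι) {f g : ι → ℝ} (hf : ∀ i ∈ s, 0 < f i)
    (hg : ∀ i ∈ s, 0 < g i) :
    ∑ i ∈ s, Real.log (f i / g i) = Real.log (∏ i ∈ s, f i) - Real.log (∏ i ∈ s, g i) := by
  rw [Real.log_prod fun i hi => (hf i hi).ne', Real.log_prod fun i hi => (hg i hi).ne',
    ← Finset.sum_sub_distrib]
  exact Finset.sum_congr rfl fun i hi => Real.log_div (hf i hi).ne' (hg i hi).ne'

/-- Conditionally on an input sequence, the likelihood ratio against the output law of its type
rarely exceeds the mutual information. -/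
theorem sum_Wn_exceed_le {X Y : Type*} [Fintype X] [Fintype Y] {W : X → Y → ℝ} (hW : IsChannel W)
    {n : ℕ} (hn : 0 < n) (x : Fin n → X) {t : ℝ} (ht : 0 < t) :
    ∑ y with Real.exp (n * mutInf (empType x) W + t) * ∏ i, outLaw (empType x) W (y i) < Wn W n x y,
      Wn W n x y ≤ 8 * (Fintype.card X * Fintype.card Y) * n / t ^ 2 := by
  set T := empType x with hT
  have hTp : IsPMF T := isPMF_empType hn x
  set g : Fin n → Y → ℝ := fun i y => Real.log (W (x i) y / outLaw T W y) with hg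
  have hp : ∀ i, IsPMF (W (x i)) := fun i => hW.isPMF _
  have hmean : ∑ i, ∑ y, W (x i) y * g i y = n * mutInf T W := by
    rw [mutInf_eq_sum_log]
    exact sum_comp_eq_empType hn x fun a => ∑ y, W a y * Real.log (W a y / outLaw T W y)
  have hvar : ∑ i, ∑ y, W (x i) y * g i y ^ 2 ≤ 8 * (Fintype.card X * Fintype.card Y) * n := by
    have := sum_comp_eq_empType hn x fun a => ∑ y, W a y * Real.log (W a y / outLaw T W y) ^ 2
    simp only [hg]
    rw [this, mul_comm]
    gcongr
    exact sum_log_sq_le hTp hW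
  have hcheb := sum_pi_chebyshev hp g ht
  refine le_trans ?_ (hcheb.trans (by gcongr))
  refine Finset.sum_le_sum_of_subset_of_nonneg ?_ fun y _ _ => (hW.Wn n).1 x y
  intro y hy
  simp only [Finset.mem_filter, Finset.mem_univ, true_and] at hy ⊢
  have hout0 : ∀ i, 0 ≤ outLaw T W (y i) := fun i => (hTp.outLaw hW).1 _
  have hW0 : 0 < Wn W n x y := lt_of_le_of_lt
    (mul_nonneg (Real.exp_nonneg _) (Finset.prod_nonneg fun i _ => hout0 i)) hy
  have hWi : ∀ i, 0 < W (x i) (y i) := fun i =>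
    lt_of_le_of_ne (hW.1 _ _) fun h => hW0.ne' (Finset.prod_eq_zero (Finset.mem_univ i) h.symm)
  have hTi : ∀ i, 0 < T (x i) := by
    intro i
    have : 0 < #{j | x j = x i} := Finset.card_pos.2 ⟨i, by simp⟩
    rw [hT, empType]
    positivity
  have houti : ∀ i, 0 < outLaw T W (y i) := fun i =>
    lt_of_lt_of_le (mul_pos (hTi i) (hWi i)) (mul_le_outLaw hTp.1 hW.1 _ _)
  have hlog := log_prod_div Finset.univ (fun i _ => hWi i) (fun i _ => houti i)
  have hpos : 0 < ∏ i, outLaw T W (y i) := Finset.prod_pos fun i _ => houti i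
  have h2 := Real.log_lt_log (by positivity) hy
  rw [Real.log_mul (Real.exp_pos _).ne' hpos.ne', Real.log_exp] at h2
  rw [hmean]
  refine le_trans ?_ (le_abs_self _)
  change _ ≤ ∑ i, Real.log (W (x i) (y i) / outLaw T W (y i)) - _
  rw [hlog]
  change Real.log (∏ i, W (x i) (y i)) > _ at h2
  linarith

/-- If the inputs have types of mutual information at most `r`, the information density of the
block channel rarely exceeds `n r` by much. -/
theorem sum_density_exceed_le {X Y : Type*} [Fintype X] [Fintype Y] {W : X → Y → ℝ}
    (hW : IsChannel W) {n : ℕ} (hn : 0 < n) {q : (Fin n → X) → ℝ} (hq : IsPMF q) {r : ℝ}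
    (hr : ∀ x, q x ≠ 0 → mutInf (empType x) W ≤ r) {t s : ℝ} (ht : 0 < t) (hs : 0 < s) :
    ∑ x, q x * ∑ y with ((n + 1) ^ Fintype.card X * Real.exp (n * r + t) / s)
        * outLaw q (Wn W n) y < Wn W n x y, Wn W n x y
      ≤ s + 8 * (Fintype.card X * Fintype.card Y) * n / t ^ 2 := by
  set Ty := univ.image (empType : (Fin n → X) → X → ℝ) with hTy
  set K : ℝ := (n + 1) ^ Fintype.card X with hK
  have hKpos : 0 < K := by positivity
  set ρ : (Fin n → Y) → ℝ := fun y => ∑ T ∈ Ty, ∏ i, outLaw T W (y i) with hρ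
  have hTpmf : ∀ T ∈ Ty, IsPMF T := by
    intro T hT
    obtain ⟨x, -, rfl⟩ := Finset.mem_image.1 hT
    exact isPMF_empType hn x
  have hρterm : ∀ T ∈ Ty, ∀ y : Fin n → Y, 0 ≤ ∏ i, outLaw T W (y i) := fun T hT y =>
    Finset.prod_nonneg fun i _ => ((hTpmf T hT).outLaw hW).1 _
  have hρsum : ∑ y, ρ y ≤ K := by
    rw [hρ, Finset.sum_comm]
    have : ∀ T ∈ Ty, ∑ y : Fin n → Y, ∏ i, outLaw T W (y i) = 1 := fun T hT =>
      (IsPMF.pi fun _ : Fin n => (hTpmf T hT).outLaw hW).2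
    rw [Finset.sum_congr rfl this, Finset.sum_const, nsmul_eq_mul, mul_one, hK]
    exact_mod_cast card_image_empType_le X n
  have hWn := hW.Wn n
  set o := outLaw q (Wn W n) with ho
  have ho0 : ∀ y, 0 ≤ o y := (hq.outLaw hWn).1
  set E := Real.exp (n * r + t) with hE
  have hEpos : 0 < E := Real.exp_pos _
  have hpt : ∀ x, q x * ∑ y with (K * E / s) * o y < Wn W n x y, Wn W n x y
      ≤ q x * ∑ y with o y < s / K * ρ y, Wn W n x y
        + q x * (8 * (Fintype.card X * Fintype.card Y) * n / t ^ 2) := by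
    intro x
    by_cases hx : q x = 0
    · simp [hx]
    rw [← mul_add]
    refine mul_le_mul_of_nonneg_left ?_ (hq.1 x)
    refine le_trans ?_ (add_le_add_right (sum_Wn_exceed_le hW hn x ht) _)
    rw [← Finset.sum_filter_add_sum_filter_not (Finset.univ.filter fun y =>
      (K * E / s) * o y < Wn W n x y) (fun y => o y < s / K * ρ y)]
    refine add_le_add ?_ ?_
    · refine Finset.sum_le_sum_of_subset_of_nonneg ?_ fun y _ _ => hWn.1 x y
      intro y
      simp only [Finset.mem_filter, Finset.mem_univ, true_and]
      exact fun h => h.2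
    · refine Finset.sum_le_sum_of_subset_of_nonneg ?_ fun y _ _ => hWn.1 x y
      intro y
      simp only [Finset.mem_filter, Finset.mem_univ, true_and]
      rintro ⟨h1, h2⟩
      refine lt_of_le_of_lt ?_ h1
      rw [not_lt] at h2
      have hTx : empType x ∈ Ty := Finset.mem_image_of_mem _ (Finset.mem_univ x)
      have h3 : ∏ i, outLaw (empType x) W (y i) ≤ ρ y :=
        Finset.single_le_sum (f := fun T => ∏ i, outLaw T W (y i))
          (fun T hT => hρterm T hT y) hTx
      calc Real.exp (n * mutInf (empType x) W + t) * ∏ i, outLaw (empType x) W (y i)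
          ≤ E * ρ y := by
            apply mul_le_mul _ h3 (hρterm _ hTx y) hEpos.le
            apply Real.exp_le_exp.2
            have := hr x hx
            gcongr
        _ = (K * E / s) * (s / K * ρ y) := by field_simp
        _ ≤ (K * E / s) * o y := by gcongr
  refine (Finset.sum_le_sum fun x _ => hpt x).trans ?_
  rw [Finset.sum_add_distrib, ← Finset.sum_mul, hq.2, one_mul]
  refine add_le_add_left ?_ _
  calc ∑ x, q x * ∑ y with o y < s / K * ρ y, Wn W n x y
      = ∑ y with o y < s / K * ρ y, o y := by
        simp_rw [Finset.mul_sum]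
        rw [Finset.sum_comm]
        rfl
    _ ≤ ∑ y with o y < s / K * ρ y, s / K * ρ y :=
        Finset.sum_le_sum fun y hy => (Finset.mem_filter.1 hy).2.le
    _ ≤ ∑ y, s / K * ρ y := by
        refine Finset.sum_le_sum_of_subset_of_nonneg (Finset.filter_subset _ _) fun y _ _ => ?_
        exact mul_nonneg (by positivity) (Finset.sum_nonneg fun T hT => hρterm T hT y)
    _ ≤ s / K * K := by rw [← Finset.mul_sum]; gcongr
    _ = s := by field_simp

/-- Over inputs that can be soft-covered by `L` codewords, there are at most as many identification
messages as there are `L`-tuples of codewords. -/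
theorem card_le_of_IDCodeErr {X Y M : Type*} [Fintype X] [Fintype Y] [Fintype M] {W : X → Y → ℝ}
    (hW : IsChannel W) {n L : ℕ} {Q : M → (Fin n → X) → ℝ} (hQ : ∀ m, IsPMF (Q m))
    {D : M → Finset (Fin n → Y)} {l1 l2 η : ℝ} (hD : IDCodeErr n W Q D l1 l2)
    (hcov : ∀ m, ∃ c : Fin L → Fin n → X,
      ∑ y, |(∑ l, Wn W n (c l) y) / L - outLaw (Q m) (Wn W n) y| ≤ η)
    (hη : l1 + l2 + 2 * η < 1) :
    Fintype.card M ≤ Fintype.card (Fin L → Fin n → X) := by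
  choose c hc using hcov
  refine Fintype.card_le_of_injective c fun m m' hmm => ?_
  by_contra hne
  have hWn := hW.Wn n
  have hout : ∀ m (S : Finset (Fin n → Y)), ∑ y ∈ S, outLaw (Q m) (Wn W n) y
      = ∑ x, Q m x * ∑ y ∈ S, Wn W n x y := by
    intro m S
    simp only [outLaw, Finset.mul_sum]
    exact Finset.sum_comm
  have h1 := hD.1 m'
  have h2 := hD.2 m m' hne
  rw [← hout] at h1 h2
  have h3 : ∑ y ∈ D m', outLaw (Q m') (Wn W n) y + ∑ y ∈ (D m')ᶜ, outLaw (Q m') (Wn W n) y = 1 := by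
    rw [Finset.sum_add_sum_compl, ((hQ m').outLaw hWn).2]
  have h4 : ∑ y ∈ D m', outLaw (Q m') (Wn W n) y - ∑ y ∈ D m', outLaw (Q m) (Wn W n) y ≤ 2 * η := by
    rw [← Finset.sum_sub_distrib]
    calc ∑ y ∈ D m', (outLaw (Q m') (Wn W n) y - outLaw (Q m) (Wn W n) y)
        ≤ ∑ y ∈ D m', (|(∑ l, Wn W n (c m l) y) / L - outLaw (Q m) (Wn W n) y|
            + |(∑ l, Wn W n (c m' l) y) / L - outLaw (Q m') (Wn W n) y|) := by
          refine Finset.sum_le_sum fun y _ => ?_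
          rw [hmm]
          have a1 := le_abs_self ((∑ l, Wn W n (c m' l) y) / L - outLaw (Q m) (Wn W n) y)
          have a2 := neg_abs_le ((∑ l, Wn W n (c m' l) y) / L - outLaw (Q m') (Wn W n) y)
          linarith
      _ ≤ ∑ y, (|(∑ l, Wn W n (c m l) y) / L - outLaw (Q m) (Wn W n) y|
            + |(∑ l, Wn W n (c m' l) y) / L - outLaw (Q m') (Wn W n) y|) :=
          Finset.sum_le_sum_of_subset_of_nonneg (Finset.subset_univ _)
            fun y _ _ => by positivity
      _ ≤ 2 * η := by
          rw [Finset.sum_add_distrib]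
          linarith [hc m, hc m']
  linarith

/-- Single-letter converse for inputs of small mutual information. -/
theorem log_card_le_of_IDCodeErr {X Y M : Type*} [Fintype X] [Fintype Y] [Fintype M]
    {W : X → Y → ℝ} (hW : IsChannel W) {n : ℕ} (hn : 0 < n) {Q : M → (Fin n → X) → ℝ}
    (hQ : ∀ m, IsPMF (Q m)) {D : M → Finset (Fin n → Y)} (hD : IDCodeErr n W Q D (1 / 10) (1 / 10))
    {r δ : ℝ} (hδ : 0 < δ) (hr : ∀ m x, Q m x ≠ 0 → mutInf (empType x) W ≤ r)
    (hnδ : 160 * (Fintype.card X * Fintype.card Y) ≤ n * δ ^ 2) [Nonempty M] :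
    Real.log (Fintype.card M)
      ≤ n * Real.log (Fintype.card X)
        * (8000 * (n + 1) ^ Fintype.card X * Real.exp (n * (r + δ)) + 1) := by
  have hn' : (0 : ℝ) < n := by exact_mod_cast hn
  set θ : ℝ := (n + 1) ^ Fintype.card X * Real.exp (n * r + n * δ) / (1 / 20) with hθ
  have hθpos : 0 < θ := by positivity
  set L := ⌈400 * θ⌉₊ with hL
  have hLle : 400 * θ ≤ L := Nat.le_ceil _
  have hLlt : (L : ℝ) < 400 * θ + 1 := Nat.ceil_lt_add_one (by positivity)
  have hLpos : (0 : ℝ) < L := lt_of_lt_of_le (by positivity) hLle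
  have hsq : Real.sqrt (θ / L) ≤ 1 / 20 := by
    rw [Real.sqrt_le_left (by norm_num), div_le_iff₀ hLpos]
    linarith
  have hβ : (1 / 20 : ℝ) + 8 * (Fintype.card X * Fintype.card Y) * n / (n * δ) ^ 2 ≤ 1 / 10 := by
    have : 8 * (Fintype.card X * Fintype.card Y) * n / (n * δ) ^ 2 ≤ (1 / 20 : ℝ) := by
      rw [div_le_iff₀ (by positivity)]
      nlinarith
    linarith
  have hcard : Fintype.card M ≤ Fintype.card (Fin L → Fin n → X) := by
    refine card_le_of_IDCodeErr hW hQ hD (L := L) (η := 1 / 4) (fun m => ?_) (by norm_num)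
    obtain ⟨c, hc⟩ := exists_soft_covering (hQ m) (hW.Wn n) hθpos
      (sum_density_exceed_le hW hn (hQ m) (hr m) (t := n * δ) (s := 1 / 20) (by positivity)
        (by norm_num)) (L := L) (by exact_mod_cast hLpos)
    exact ⟨c, hc.trans (by linarith)⟩
  have hMpos : (0 : ℝ) < Fintype.card M := by exact_mod_cast Fintype.card_pos
  calc Real.log (Fintype.card M) ≤ Real.log (Fintype.card (Fin L → Fin n → X)) :=
        Real.log_le_log hMpos (by exact_mod_cast hcard)
    _ = n * Real.log (Fintype.card X) * L := by
        simp [Real.log_pow]; ring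
    _ ≤ n * Real.log (Fintype.card X) * (400 * θ + 1) := by
        have := Real.log_natCast_nonneg (Fintype.card X)
        gcongr
    _ = _ := by
        rw [hθ, mul_add (n : ℝ) r δ]
        ring

theorem tendsto_pow_mul_exp_neg_nat (k : ℕ) {c : ℝ} (hc : 0 < c) :
    Filter.Tendsto (fun n : ℕ => ((n : ℝ) + 1) ^ k * Real.exp (-(c * n))) Filter.atTop
      (nhds 0) := by
  have h1 : Filter.Tendsto (fun n : ℕ => c * ((n : ℝ) + 1)) Filter.atTop Filter.atTop :=
    (Filter.tendsto_atTop_add_const_right _ _ tendsto_natCast_atTop_atTop).const_mul_atTop hc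
  have h2 := ((Real.tendsto_pow_mul_exp_neg_atTop_nhds_zero k).comp h1).const_mul
    (Real.exp c / c ^ k)
  rw [mul_zero] at h2
  refine h2.congr fun n => ?_
  simp only [Function.comp]
  rw [mul_pow, show -(c * (n : ℝ)) = c + -(c * (n + 1)) by ring, Real.exp_add]
  field_simp

theorem exp_le_log_of_le_loglog {k n : ℕ} (hn : 0 < n) {p : ℝ} (hp : 0 < p)
    (h : p ≤ (1 / n) * Real.log (Real.log k)) : Real.exp (n * p) ≤ Real.log k := by
  have hn' : (0 : ℝ) < n := by exact_mod_cast hn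
  have h1 : n * p ≤ Real.log (Real.log k) := by
    rw [one_div, inv_mul_eq_div, le_div_iff₀ hn'] at h
    linarith
  have h2 : 0 < Real.log k := by
    refine lt_of_le_of_ne (Real.log_natCast_nonneg k) fun h0 => ?_
    rw [← h0, Real.log_zero] at h1
    nlinarith
  rwa [← Real.le_log_iff_exp_le h2]

/-- In a good identification code the messages rarely use types of mutual information below the
identification rate. -/
theorem eventually_sum_low_type_lt {X Y : Type*} [Fintype X] [Fintype Y] {W : X → Y → ℝ}
    (hW : IsChannel W) {p ε : ℝ} (hp : 0 < p) (hε : 0 < ε) :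
    ∃ n₀ : ℕ, ∀ n, n₀ ≤ n → ∀ (k : ℕ) (Q : Fin k → (Fin n → X) → ℝ)
      (D : Fin k → Finset (Fin n → Y)), (∀ m, IsPMF (Q m)) → IDCodeErr n W Q D (1 / 60) (1 / 60) →
      p ≤ (1 / n) * Real.log (Real.log k) →
      ∑ m, ∑ x with mutInf (empType x) W < p - ε, Q m x < k * (1 / 3) := by
  have hlim : Filter.Tendsto (fun n : ℕ => 6 * (((n : ℝ) + 1) ^ 0 * Real.exp (-(p * n)))
      + Real.log (Fintype.card X) * (8000 * (((n : ℝ) + 1) ^ (Fintype.card X + 1)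
        * Real.exp (-(3 * ε / 4 * n))))
      + Real.log (Fintype.card X) * (((n : ℝ) + 1) ^ 1 * Real.exp (-(p * n))))
      Filter.atTop (nhds 0) := by
    have h1 := (tendsto_pow_mul_exp_neg_nat 0 hp).const_mul 6
    have h2 := ((tendsto_pow_mul_exp_neg_nat (Fintype.card X + 1)
      (show 0 < 3 * ε / 4 by positivity)).const_mul 8000).const_mul (Real.log (Fintype.card X))
    have h3 := (tendsto_pow_mul_exp_neg_nat 1 hp).const_mul (Real.log (Fintype.card X))
    simpa using (h1.add h2).add h3
  have hev := hlim.eventually_lt_const (show (0 : ℝ) < 1 by norm_num)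
  have hev2 : ∀ᶠ n : ℕ in Filter.atTop,
      160 * ((Fintype.card X : ℝ) * Fintype.card Y) ≤ n * (ε / 4) ^ 2 := by
    have : Filter.Tendsto (fun n : ℕ => (n : ℝ) * (ε / 4) ^ 2) Filter.atTop Filter.atTop :=
      tendsto_natCast_atTop_atTop.atTop_mul_const (by positivity)
    exact this.eventually_ge_atTop _
  obtain ⟨n₀, hn₀⟩ := Filter.eventually_atTop.1
    ((hev.and hev2).and (Filter.eventually_gt_atTop 0))
  refine ⟨n₀, fun n hn k Q D hQ hD hk => ?_⟩
  obtain ⟨⟨hA, hB⟩, hn0⟩ := hn₀ n hn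
  by_contra! hcon
  have hlogk := exp_le_log_of_le_loglog hn0 hp hk
  have hkpos : (0 : ℝ) < k := by
    rcases Nat.eq_zero_or_pos k with rfl | h
    · simp at hlogk
      linarith [Real.exp_pos (n * p)]
    · exact_mod_cast h
  set s : Fin k → ℝ := fun m => ∑ x with mutInf (empType x) W < p - ε, Q m x with hs
  have hs1 : ∀ m, s m ≤ 1 := fun m => by
    rw [← (hQ m).2]
    exact Finset.sum_le_sum_of_subset_of_nonneg (Finset.filter_subset _ _) fun x _ _ => (hQ m).1 x
  let M := {m : Fin k // 1 / 6 ≤ s m}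
  have hMcard : (k : ℝ) / 6 ≤ Fintype.card M := by
    have h1 : ∀ m, s m ≤ (if 1 / 6 ≤ s m then 1 else 0) + 1 / 6 := by
      intro m
      split_ifs with h
      · linarith [hs1 m]
      · linarith
    have h2 := hcon.trans (Finset.sum_le_sum fun m _ => h1 m)
    rw [Finset.sum_add_distrib, Finset.sum_const, Finset.card_univ, Fintype.card_fin, nsmul_eq_mul,
      ← Finset.natCast_card_filter] at h2
    have h3 : Fintype.card M = #{m | 1 / 6 ≤ s m} := Fintype.card_subtype _
    rw [h3]
    linarith
  have hMpos : (0 : ℝ) < Fintype.card M := lt_of_lt_of_le (by positivity) hMcard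
  have : Nonempty M := Fintype.card_pos_iff.1 (by exact_mod_cast hMpos)
  let Q' : M → (Fin n → X) → ℝ := fun m x =>
    if mutInf (empType x) W < p - ε then Q m x / s m else 0
  have hsm : ∀ m : M, 0 < s m := fun m => lt_of_lt_of_le (by norm_num) m.2
  have hQ' : ∀ m, IsPMF (Q' m) := by
    intro m
    refine ⟨fun x => ?_, ?_⟩
    · simp only [Q']
      split_ifs
      · exact div_nonneg ((hQ m).1 x) (hsm m).le
      · exact le_rfl
    · simp only [Q', ← Finset.sum_filter]
      rw [← Finset.sum_div]
      exact div_self (hsm m).ne'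
  have hQle : ∀ m x, Q' m x ≤ 6 * Q m x := by
    intro m x
    have := (hQ m).1 x
    simp only [Q']
    split_ifs
    · rw [div_le_iff₀ (hsm m)]
      nlinarith [m.2]
    · positivity
  have hbound : ∀ (m : M) (S : Finset (Fin n → Y)), ∑ x, Q m x * ∑ y ∈ S, Wn W n x y ≤ 1 / 60 →
      ∑ x, Q' m x * ∑ y ∈ S, Wn W n x y ≤ 1 / 10 := by
    intro m S h
    calc ∑ x, Q' m x * ∑ y ∈ S, Wn W n x y ≤ ∑ x, 6 * (Q m x * ∑ y ∈ S, Wn W n x y) := by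
          refine Finset.sum_le_sum fun x _ => ?_
          rw [← mul_assoc]
          exact mul_le_mul_of_nonneg_right (hQle m x)
            (Finset.sum_nonneg fun y _ => (hW.Wn n).1 x y)
      _ ≤ 1 / 10 := by rw [← Finset.mul_sum]; linarith
  have hD' : IDCodeErr n W Q' (fun m : M => D m) (1 / 10) (1 / 10) :=
    ⟨fun m => hbound m _ (hD.1 m),
      fun m m' hne => hbound m _ (hD.2 m m' fun h => hne (Subtype.ext h))⟩
  have hr : ∀ m x, Q' m x ≠ 0 → mutInf (empType x) W ≤ p - ε := by
    intro m x h
    simp only [Q'] at h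
    split_ifs at h with h'
    · exact h'.le
    · exact absurd rfl h
  have hfin := log_card_le_of_IDCodeErr hW hn0 hQ' hD' (δ := ε / 4) (by positivity) hr hB
  have h6 : Real.log k ≤ 6 + Real.log (Fintype.card M) := by
    have : Real.log k ≤ Real.log (6 * Fintype.card M) :=
      Real.log_le_log hkpos (by linarith)
    rw [Real.log_mul (by norm_num) hMpos.ne'] at this
    linarith [Real.log_le_sub_one_of_pos (show (0 : ℝ) < 6 by norm_num)]
  have hexp : Real.exp (n * p) ≤ 6 + n * Real.log (Fintype.card X)
      * (8000 * (n + 1) ^ Fintype.card X * Real.exp (n * (p - ε + ε / 4)) + 1) := by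
    linarith
  have hlogX := Real.log_natCast_nonneg (Fintype.card X)
  have hmul := mul_le_mul_of_nonneg_right hexp (Real.exp_nonneg (-(p * n)))
  rw [← Real.exp_add, show n * p + -(p * n) = 0 by ring, Real.exp_zero] at hmul
  have hexp2 : Real.exp (n * (p - ε + ε / 4)) * Real.exp (-(p * n))
      = Real.exp (-(3 * ε / 4 * n)) := by
    rw [← Real.exp_add]; congr 1; ring
  have hn' : (n : ℝ) ≤ n + 1 := by linarith
  have : (6 + n * Real.log (Fintype.card X)
      * (8000 * (n + 1) ^ Fintype.card X * Real.exp (n * (p - ε + ε / 4)) + 1))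
        * Real.exp (-(p * n))
      ≤ 6 * (((n : ℝ) + 1) ^ 0 * Real.exp (-(p * n)))
      + Real.log (Fintype.card X) * (8000 * (((n : ℝ) + 1) ^ (Fintype.card X + 1)
        * Real.exp (-(3 * ε / 4 * n))))
      + Real.log (Fintype.card X) * (((n : ℝ) + 1) ^ 1 * Real.exp (-(p * n))) := by
    rw [← hexp2]
    calc _ = 6 * (((n : ℝ) + 1) ^ 0 * Real.exp (-(p * n)))
          + Real.log (Fintype.card X) * (8000 * (((n : ℝ) + 1) ^ Fintype.card X * n
            * (Real.exp (n * (p - ε + ε / 4)) * Real.exp (-(p * n)))))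
          + Real.log (Fintype.card X) * (n * Real.exp (-(p * n))) := by ring
      _ ≤ _ := by
        rw [pow_succ, pow_one]
        gcongr
  linarith

theorem pos_of_rate {p : ℝ} (hp : 0 ≤ p) {k n : ℕ} (hn : 0 < n)
    (hk : (0 < p → p ≤ (1 / n) * Real.log (Real.log k)) ∧ (p = 0 → k = 1)) : 0 < k := by
  rcases hp.eq_or_lt with h | h
  · rw [hk.2 h.symm]; norm_num
  · rcases Nat.eq_zero_or_pos k with rfl | h'
    · have := exp_le_log_of_le_loglog hn h (hk.1 h)
      simp at this
      linarith [Real.exp_pos (n * p)]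
    · exact h'

theorem eventually_sum_low_type_lt' {X Y : Type*} [Fintype X] [Fintype Y] {W : X → Y → ℝ}
    (hW : IsChannel W) {p ε : ℝ} (hp : 0 ≤ p) (hε : 0 < ε) :
    ∃ n₀ : ℕ, ∀ n, n₀ ≤ n → 0 < n → ∀ (k : ℕ) (Q : Fin k → (Fin n → X) → ℝ)
      (D : Fin k → Finset (Fin n → Y)), (∀ m, IsPMF (Q m)) → IDCodeErr n W Q D (1 / 60) (1 / 60) →
      ((0 < p → p ≤ (1 / n) * Real.log (Real.log k)) ∧ (p = 0 → k = 1)) →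
      ∑ m, ∑ x with mutInf (empType x) W < p - ε, Q m x < k * (1 / 3) := by
  rcases hp.eq_or_lt with rfl | hp
  · refine ⟨0, fun n _ hn k Q D hQ hD hk => ?_⟩
    have : ∀ m, ∑ x with mutInf (empType x) W < 0 - ε, Q m x = 0 := by
      intro m
      rw [Finset.filter_false_of_mem, Finset.sum_empty]
      intro x _
      have := mutInf_nonneg (isPMF_empType hn x) hW
      linarith
    rw [Finset.sum_congr rfl fun m _ => this m, hk.2 rfl]
    norm_num
  · obtain ⟨n₀, h⟩ := eventually_sum_low_type_lt hW hp hε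
    exact ⟨n₀, fun n hn _ k Q D hQ hD hk => h n hn k Q D hQ hD (hk.1 hp)⟩

theorem isPMF_average {A : Type*} [Fintype A] {a b : ℕ} (ha : 0 < a) (hb : 0 < b)
    {Q : Fin a → Fin b → A → ℝ} (hQ : ∀ i j, IsPMF (Q i j)) :
    IsPMF (fun x => ((a * b : ℕ) : ℝ)⁻¹ * ∑ i, ∑ j, Q i j x) := by
  refine ⟨fun x => mul_nonneg (by positivity) (Finset.sum_nonneg fun i _ =>
    Finset.sum_nonneg fun j _ => (hQ i j).1 x), ?_⟩
  rw [← Finset.mul_sum, Finset.sum_comm]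
  have : ∀ i, ∑ x, ∑ j, Q i j x = b := by
    intro i
    rw [Finset.sum_comm]
    simp [(hQ i _).2]
  simp_rw [this]
  simp only [Finset.sum_const, Finset.card_univ, Fintype.card_fin, nsmul_eq_mul]
  push_cast
  field_simp

theorem sum_average_lt {A : Type*} {a b k : ℕ} (ha : 0 < a) (hb : 0 < b)
    {Q : Fin k → Fin a → Fin b → A → ℝ} {E : Finset A}
    (h : ∑ m, ∑ x ∈ E, ((a * b : ℕ) : ℝ)⁻¹ * ∑ i, ∑ j, Q m i j x < k * (1 / 3)) :
    ∑ x ∈ E, ∑ m, ∑ i, ∑ j, Q m i j x < k * (a * b) * (1 / 3) := by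
  have hk0 : (0 : ℝ) < (a * b : ℕ) := by exact_mod_cast Nat.mul_pos ha hb
  rw [Finset.sum_comm] at h
  simp_rw [← Finset.mul_sum] at h
  rw [inv_mul_lt_iff₀ hk0] at h
  push_cast at h
  linarith

/-- Converse: an achievable triple is nearly dominated by the mutual informations of one common
input law. -/
theorem BC3Achievable.exists_mutInf_ge {X Y1 Y2 Y3 : Type} [Fintype X] [Fintype Y1] [Fintype Y2]
    [Fintype Y3] {W : X → Y1 → Y2 → Y3 → ℝ} (hW : IsBC3 W) {p : ℝ × ℝ × ℝ}
    (hp : BC3Achievable W p) {ε : ℝ} (hε : 0 < ε) :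
    ∃ P : X → ℝ, IsPMF P ∧ p.1 - ε ≤ mutInf P (marg1 W) ∧ p.2.1 - ε ≤ mutInf P (marg2 W) ∧
      p.2.2 - ε ≤ mutInf P (marg3 W) := by
  obtain ⟨h1, h2, h3, hach⟩ := hp
  have hl : (0 : ℝ) < 1 / 60 := by norm_num
  obtain ⟨n₀, hcode⟩ := hach (1 / 60) (1 / 60) (1 / 60) (1 / 60) (1 / 60) (1 / 60) hl hl hl hl hl hl
  obtain ⟨n₁, hn₁⟩ := eventually_sum_low_type_lt' hW.isChannel_marg1 h1 hε
  obtain ⟨n₂, hn₂⟩ := eventually_sum_low_type_lt' hW.isChannel_marg2 h2 hε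
  obtain ⟨n₃, hn₃⟩ := eventually_sum_low_type_lt' hW.isChannel_marg3 h3 hε
  set n := n₀ + n₁ + n₂ + n₃ + 1 with hn
  have hn0 : 0 < n := by omega
  obtain ⟨k1, k2, k3, Q, D1, D2, D3, ⟨hQ, e1, e2, e3⟩, r1, r2, r3⟩ := hcode n (by omega)
  have p1 := pos_of_rate h1 hn0 r1
  have p2 := pos_of_rate h2 hn0 r2
  have p3 := pos_of_rate h3 hn0 r3
  have b1 := sum_average_lt p2 p3 (hn₁ n (by omega) hn0 k1 _ D1
    (fun m1 => isPMF_average p2 p3 (hQ m1)) e1 r1)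
  have b2 := sum_average_lt p1 p3 (hn₂ n (by omega) hn0 k2 _ D2
    (fun m2 => isPMF_average p1 p3 fun m1 m3 => hQ m1 m2 m3) e2 r2)
  have b3 := sum_average_lt p1 p2 (hn₃ n (by omega) hn0 k3 _ D3
    (fun m3 => isPMF_average p1 p2 fun m1 m2 => hQ m1 m2 m3) e3 r3)
  by_contra! hcon
  set S : (Fin n → X) → ℝ := fun x => ∑ m1, ∑ m2, ∑ m3, Q m1 m2 m3 x with hS
  have s2 : ∀ x, ∑ m2, ∑ m1, ∑ m3, Q m1 m2 m3 x = S x := fun x => Finset.sum_comm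
  have s3 : ∀ x, ∑ m3, ∑ m1, ∑ m2, Q m1 m2 m3 x = S x := fun x => by
    rw [hS, Finset.sum_comm]
    refine Finset.sum_congr rfl fun m1 _ => ?_
    rw [Finset.sum_comm]
  simp_rw [s2] at b2
  simp_rw [s3] at b3
  have hS0 : ∀ x, 0 ≤ S x := fun x => Finset.sum_nonneg fun _ _ => Finset.sum_nonneg fun _ _ =>
    Finset.sum_nonneg fun _ _ => (hQ _ _ _).1 x
  have htot : ∑ x, S x = k1 * k2 * k3 := by
    have : ∑ x, S x = ∑ m1, ∑ m2, ∑ m3, ∑ x, Q m1 m2 m3 x := by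
      rw [hS, Finset.sum_comm]
      refine Finset.sum_congr rfl fun m1 _ => ?_
      rw [Finset.sum_comm]
      refine Finset.sum_congr rfl fun m2 _ => ?_
      rw [Finset.sum_comm]
    rw [this]
    simp [(hQ _ _ _).2]
    ring
  have hcover : ∑ x, S x ≤ ∑ x with mutInf (empType x) (marg1 W) < p.1 - ε, S x
      + ∑ x with mutInf (empType x) (marg2 W) < p.2.1 - ε, S x
      + ∑ x with mutInf (empType x) (marg3 W) < p.2.2 - ε, S x := by
    simp only [Finset.sum_filter]
    rw [← Finset.sum_add_distrib, ← Finset.sum_add_distrib]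
    refine Finset.sum_le_sum fun x _ => ?_
    have h0 := hS0 x
    by_cases c1 : mutInf (empType x) (marg1 W) < p.1 - ε
    · rw [if_pos c1]; split_ifs <;> linarith
    by_cases c2 : mutInf (empType x) (marg2 W) < p.2.1 - ε
    · rw [if_pos c2]; split_ifs <;> linarith
    · rw [if_pos (hcon _ (isPMF_empType hn0 x) (not_lt.1 c1) (not_lt.1 c2))]
      split_ifs
      linarith
  rw [htot] at hcover
  linarith

/-- The uniform law on `S`, or on the whole space if `S` is empty. -/
def unifOn {V : Type*} [Fintype V] (S : Finset V) (v : V) : ℝ :=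
  if S.Nonempty then (if v ∈ S then (#S : ℝ)⁻¹ else 0) else (Fintype.card V : ℝ)⁻¹

theorem isPMF_unifOn {V : Type*} [Fintype V] [Nonempty V] (S : Finset V) : IsPMF (unifOn S) := by
  unfold unifOn
  by_cases hS : S.Nonempty
  · have : (#S : ℝ) ≠ 0 := by exact_mod_cast hS.card_pos.ne'
    simp only [hS, if_true]
    refine ⟨fun v => by dsimp only; split_ifs <;> positivity, ?_⟩
    rw [Finset.sum_ite_mem, Finset.univ_inter, Finset.sum_const, nsmul_eq_mul, mul_inv_cancel₀ this]
  · simp only [hS, if_false]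
    exact ⟨fun v => by positivity, by simp⟩

/-- A family of subsets of `V` of relative size `ρ`, such that a uniformly random member contains
every point with probability `ρ` and every pair of points with probability at most `ρ ^ 2`. -/
structure IsPairwiseDesign {V M : Type*} [Fintype V] [Fintype M] (B : M → Finset V) (ρ : ℝ) :
    Prop where
  pos : 0 < ρ
  le_one : ρ ≤ 1
  card_eq : ∀ m, (#(B m) : ℝ) = ρ * Fintype.card V
  card_mem : ∀ v, (#{m | v ∈ B m} : ℝ) = ρ * Fintype.card M
  card_mem_mem : ∀ v v', v ≠ v' → (#{m | v ∈ B m ∧ v' ∈ B m} : ℝ) ≤ ρ ^ 2 * Fintype.card M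

theorem sum_unifOn_mul_le {V : Type*} [Fintype V] [Nonempty V] (S : Finset V) {h : V → ℝ}
    (h0 : ∀ v, 0 ≤ h v) (h1 : ∀ v, h v ≤ 1) {N : ℝ} (hN : 0 < N) :
    ∑ v, unifOn S v * h v ≤ 2 / N * ∑ v ∈ S, h v + 4 / N ^ 2 * (#S - N) ^ 2 := by
  have hs : 0 ≤ ∑ v ∈ S, h v := Finset.sum_nonneg fun v _ => h0 v
  by_cases hc : N / 2 ≤ #S
  · have hpos : (0 : ℝ) < #S := by linarith
    have hS : S.Nonempty := Finset.card_pos.1 (by exact_mod_cast hpos)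
    have : ∑ v, unifOn S v * h v = (#S : ℝ)⁻¹ * ∑ v ∈ S, h v := by
      simp only [unifOn, hS, if_true, ite_mul, zero_mul, Finset.sum_ite_mem, Finset.univ_inter,
        Finset.mul_sum]
    rw [this]
    have h2 : (#S : ℝ)⁻¹ ≤ 2 / N := by
      rw [inv_le_comm₀ hpos (by positivity), inv_div]; exact hc
    have := mul_le_mul_of_nonneg_right h2 hs
    have : 0 ≤ 4 / N ^ 2 * ((#S : ℝ) - N) ^ 2 := by positivity
    linarith
  · push Not at hc
    have hl : ∑ v, unifOn S v * h v ≤ 1 := by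
      rw [← (isPMF_unifOn S).2]
      exact Finset.sum_le_sum fun v _ => mul_le_of_le_one_right ((isPMF_unifOn S).1 v) (h1 v)
    have : 1 ≤ 4 / N ^ 2 * ((#S : ℝ) - N) ^ 2 := by
      rw [div_mul_eq_mul_div, le_div_iff₀ (by positivity)]
      nlinarith
    have : 0 ≤ 2 / N * ∑ v ∈ S, h v := by positivity
    linarith

section Triple

variable {V M M' : Type*} [Fintype V] [Fintype M] [Fintype M']
  {B : M → Finset V} {B' : M' → Finset V} {ρ ρ' : ℝ}

theorem IsPairwiseDesign.sum_sum_inter (hB : IsPairwiseDesign B ρ) (hB' : IsPairwiseDesign B' ρ')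
    (S : Finset V) (h : V → ℝ) :
    ∑ m, ∑ m', ∑ v ∈ S ∩ B m ∩ B' m', h v
      = Fintype.card M * Fintype.card M' * (ρ * ρ' * ∑ v ∈ S, h v) := by
  have e : ∀ m m', ∑ v ∈ S ∩ B m ∩ B' m', h v
      = ∑ v ∈ S, (if v ∈ B m then 1 else 0) * (if v ∈ B' m' then 1 else 0) * h v := by
    intro m m'
    rw [Finset.inter_assoc, ← Finset.sum_ite_mem]
    refine Finset.sum_congr rfl fun v _ => ?_
    by_cases h1 : v ∈ B m <;> by_cases h2 : v ∈ B' m' <;> simp [h1, h2]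
  simp_rw [e]
  have : ∀ m, ∑ m', ∑ v ∈ S, (if v ∈ B m then (1 : ℝ) else 0) * (if v ∈ B' m' then 1 else 0) * h v
      = ∑ v ∈ S, (if v ∈ B m then (1 : ℝ) else 0) * (ρ' * Fintype.card M') * h v := by
    intro m
    rw [Finset.sum_comm]
    refine Finset.sum_congr rfl fun v _ => ?_
    rw [← Finset.sum_mul, ← Finset.mul_sum, ← hB'.card_mem v]
    simp
  simp_rw [this]
  rw [Finset.sum_comm]
  simp_rw [Finset.mul_sum]
  refine Finset.sum_congr rfl fun v _ => ?_
  rw [← Finset.sum_mul, ← Finset.sum_mul]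
  have : ∑ m, (if v ∈ B m then (1 : ℝ) else 0) = ρ * Fintype.card M := by
    rw [← hB.card_mem v]; simp
  rw [this]; ring

theorem IsPairwiseDesign.sum_sum_card_sq_le (hB : IsPairwiseDesign B ρ)
    (hB' : IsPairwiseDesign B' ρ') (S : Finset V) :
    ∑ m, ∑ m', (#(S ∩ B m ∩ B' m') : ℝ) ^ 2
      ≤ Fintype.card M * Fintype.card M' * (ρ * ρ' * #S + (ρ * ρ' * #S) ^ 2) := by
  have e : ∀ m m', (#(S ∩ B m ∩ B' m') : ℝ) ^ 2 = ∑ v ∈ S, ∑ w ∈ S,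
      (if v ∈ B m ∧ w ∈ B m then 1 else 0) * (if v ∈ B' m' ∧ w ∈ B' m' then 1 else 0) := by
    intro m m'
    have : (#(S ∩ B m ∩ B' m') : ℝ)
        = ∑ v ∈ S, (if v ∈ B m then 1 else 0) * (if v ∈ B' m' then 1 else 0) := by
      rw [Finset.inter_assoc, Finset.card_eq_sum_ones, Nat.cast_sum, ← Finset.sum_ite_mem]
      refine Finset.sum_congr rfl fun v _ => ?_
      by_cases h1 : v ∈ B m <;> by_cases h2 : v ∈ B' m' <;> simp [h1, h2]
    rw [this, pow_two, Finset.sum_mul_sum]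
    refine Finset.sum_congr rfl fun v _ => Finset.sum_congr rfl fun w _ => ?_
    by_cases h1 : v ∈ B m <;> by_cases h2 : v ∈ B' m' <;> by_cases h3 : w ∈ B m <;>
      by_cases h4 : w ∈ B' m' <;> simp [h1, h2, h3, h4]
  have e2 : ∑ m, ∑ m', (#(S ∩ B m ∩ B' m') : ℝ) ^ 2 = ∑ v ∈ S, ∑ w ∈ S,
      (#{m | v ∈ B m ∧ w ∈ B m} : ℝ) * (#{m | v ∈ B' m ∧ w ∈ B' m} : ℝ) := by
    simp_rw [e]
    have : ∀ m, ∑ m', ∑ v ∈ S, ∑ w ∈ S, (if v ∈ B m ∧ w ∈ B m then (1 : ℝ) else 0) *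
        (if v ∈ B' m' ∧ w ∈ B' m' then 1 else 0) = ∑ v ∈ S, ∑ w ∈ S,
        (if v ∈ B m ∧ w ∈ B m then (1 : ℝ) else 0) * #{m | v ∈ B' m ∧ w ∈ B' m} := by
      intro m
      rw [Finset.sum_comm]
      refine Finset.sum_congr rfl fun v _ => ?_
      rw [Finset.sum_comm]
      refine Finset.sum_congr rfl fun w _ => ?_
      rw [← Finset.mul_sum]; simp
    simp_rw [this]
    rw [Finset.sum_comm]
    refine Finset.sum_congr rfl fun v _ => ?_
    rw [Finset.sum_comm]
    refine Finset.sum_congr rfl fun w _ => ?_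
    rw [← Finset.sum_mul]; simp
  have hp := hB.pos
  have hp' := hB'.pos
  rw [e2]
  calc _ ≤ ∑ v ∈ S, ∑ w ∈ S, ((if v = w then ρ * ρ' * (Fintype.card M * Fintype.card M' : ℝ) else 0)
        + (ρ * ρ') ^ 2 * (Fintype.card M * Fintype.card M' : ℝ)) := by
        refine Finset.sum_le_sum fun v _ => Finset.sum_le_sum fun w _ => ?_
        by_cases hvw : v = w
        · subst hvw
          simp only [and_self, if_true]
          rw [hB.card_mem, hB'.card_mem]
          have : 0 ≤ (ρ * ρ') ^ 2 * (Fintype.card M * Fintype.card M' : ℝ) := by positivity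
          linarith
        · rw [if_neg hvw, zero_add]
          calc _ ≤ (ρ ^ 2 * Fintype.card M) * (ρ' ^ 2 * Fintype.card M' : ℝ) :=
                mul_le_mul (hB.card_mem_mem v w hvw) (hB'.card_mem_mem v w hvw) (by positivity)
                  (by positivity)
            _ = _ := by ring
    _ = _ := by
        simp only [Finset.sum_add_distrib, Finset.sum_ite_eq, Finset.sum_ite_mem,
          Finset.inter_self, Finset.sum_const, nsmul_eq_mul]
        ring

/-- Averaged over two pairwise designs, sampling from the triple intersection is almost as good as
sampling from the fixed set. -/
theorem IsPairwiseDesign.sum_unifOn_inter_le [Nonempty V] (hB : IsPairwiseDesign B ρ)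
    (hB' : IsPairwiseDesign B' ρ') {S : Finset V} (hS : S.Nonempty) {h : V → ℝ}
    (h0 : ∀ v, 0 ≤ h v) (h1 : ∀ v, h v ≤ 1) {δ : ℝ} (hδ : ∑ v ∈ S, h v ≤ δ * #S) :
    ∑ m, ∑ m', ∑ v, unifOn (S ∩ B m ∩ B' m') v * h v
      ≤ Fintype.card M * Fintype.card M' * (2 * δ + 4 / (ρ * ρ' * #S)) := by
  have hp := hB.pos
  have hp' := hB'.pos
  have hS' : (0 : ℝ) < #S := by exact_mod_cast hS.card_pos
  set N : ℝ := ρ * ρ' * #S with hN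
  have hN0 : 0 < N := by positivity
  set L : ℝ := Fintype.card M * Fintype.card M' with hL
  have hL0 : 0 ≤ L := by positivity
  have h2 := hB.sum_sum_card_sq_le hB' S
  have h3 := hB.sum_sum_inter hB' S (fun _ => 1)
  have h4 := hB.sum_sum_inter hB' S h
  simp only [Finset.sum_const, nsmul_eq_mul, mul_one] at h3
  rw [← hL, ← hN] at h2 h3
  rw [← hL] at h4
  have h5 : ∑ m, ∑ m', ((#(S ∩ B m ∩ B' m') : ℝ) - N) ^ 2 ≤ L * N := by
    have : ∑ m, ∑ m', ((#(S ∩ B m ∩ B' m') : ℝ) - N) ^ 2 = ∑ m, ∑ m', (#(S ∩ B m ∩ B' m') : ℝ) ^ 2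
        - 2 * N * (∑ m, ∑ m', (#(S ∩ B m ∩ B' m') : ℝ)) + L * N ^ 2 := by
      simp_rw [sub_sq, Finset.sum_add_distrib, Finset.sum_sub_distrib, Finset.mul_sum]
      simp only [Finset.sum_const, nsmul_eq_mul, Finset.card_univ]
      congr 1
      · congr 1
        refine Finset.sum_congr rfl fun _ _ => Finset.sum_congr rfl fun _ _ => ?_
        ring
      · rw [hL]; ring
    rw [this, h3]
    nlinarith
  calc _ ≤ ∑ m, ∑ m', (2 / N * ∑ v ∈ S ∩ B m ∩ B' m', h v
        + 4 / N ^ 2 * (#(S ∩ B m ∩ B' m') - N) ^ 2) :=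
        Finset.sum_le_sum fun m _ => Finset.sum_le_sum fun m' _ => sum_unifOn_mul_le _ h0 h1 hN0
    _ = 2 / N * (L * (ρ * ρ' * ∑ v ∈ S, h v))
        + 4 / N ^ 2 * ∑ m, ∑ m', ((#(S ∩ B m ∩ B' m') : ℝ) - N) ^ 2 := by
        simp_rw [Finset.sum_add_distrib, ← Finset.mul_sum, h4]
    _ ≤ 2 / N * (L * (ρ * ρ' * (δ * #S))) + 4 / N ^ 2 * (L * N) := by gcongr
    _ = L * (2 * δ + 4 / N) := by
        rw [show ρ * ρ' * (δ * #S) = δ * N by rw [hN]; ring]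
        field_simp

end Triple

/-- The image of the law `q` under the codeword map `c`. -/
def pushLaw {V A : Type*} [Fintype V] (c : V → A) (q : V → ℝ) (x : A) : ℝ :=
  ∑ v, if c v = x then q v else 0

theorem sum_pushLaw_mul {V A : Type*} [Fintype V] [Fintype A] (c : V → A) (q : V → ℝ) (f : A → ℝ) :
    ∑ x, pushLaw c q x * f x = ∑ v, q v * f (c v) := by
  unfold pushLaw
  simp_rw [Finset.sum_mul]
  rw [Finset.sum_comm]
  refine Finset.sum_congr rfl fun v _ => ?_
  simp [ite_mul]

theorem IsPMF.pushLaw {V A : Type*} [Fintype V] [Fintype A] (c : V → A) {q : V → ℝ}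
    (hq : IsPMF q) : IsPMF (pushLaw c q) := by
  refine ⟨fun x => Finset.sum_nonneg fun v _ => ?_, ?_⟩
  · have := hq.1 v
    split_ifs <;> simp [this]
  · simpa [hq.2] using sum_pushLaw_mul c q (fun _ => 1)

/-- The sets `D m` identify the sets `B m` of codewords up to errors `δ`, when the codeword is
drawn uniformly from `B m`. -/
def Identifies {X Y V M : Type*} [Fintype Y] (n : ℕ) (W : X → Y → ℝ)
    (c : V → Fin n → X) (B : M → Finset V) (D : M → Finset (Fin n → Y)) (δ : ℝ) : Prop :=
  (∀ m, ∑ v ∈ B m, ∑ y ∈ (D m)ᶜ, Wn W n (c v) y ≤ δ * #(B m)) ∧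
  ∀ m m', m ≠ m' → ∑ v ∈ B m, ∑ y ∈ D m', Wn W n (c v) y ≤ δ * #(B m)

theorem sum_Wn_mem_Icc {X Y : Type*} [Fintype Y] {W : X → Y → ℝ} (hW : IsChannel W) (n : ℕ)
    (x : Fin n → X) (D : Finset (Fin n → Y)) : 0 ≤ ∑ y ∈ D, Wn W n x y ∧ ∑ y ∈ D, Wn W n x y ≤ 1 :=
  ⟨Finset.sum_nonneg fun y _ => (hW.Wn n).1 x y, by
    rw [← (hW.Wn n).2 x]
    exact Finset.sum_le_sum_of_subset_of_nonneg (Finset.subset_univ _)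
      fun y _ _ => (hW.Wn n).1 x y⟩

theorem Identifies.idCodeErr {X Y V M : Type*} [Fintype X] [Fintype Y] [Fintype V] [Nonempty V]
    {W : X → Y → ℝ} (hW : IsChannel W) {n : ℕ} {c : V → Fin n → X}
    {B : M → Finset V} (hne : ∀ m, (B m).Nonempty) {D : M → Finset (Fin n → Y)} {δ r l : ℝ}
    (h : Identifies n W c B D δ) {k k' : ℕ} {B' : Fin k → Finset V} {B'' : Fin k' → Finset V}
    {ρ' ρ'' : ℝ} (hB' : IsPairwiseDesign B' ρ') (hB'' : IsPairwiseDesign B'' ρ'')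
    (hr : ∀ m, (#(B m) : ℝ) = r) (hl : 2 * δ + 4 / (ρ' * ρ'' * r) ≤ l) (hpos : 0 < l) :
    IDCodeErr n W (fun m x => ((k * k' : ℕ) : ℝ)⁻¹ *
      ∑ i, ∑ j, pushLaw c (unifOn (B m ∩ B' i ∩ B'' j)) x) D l l := by
  have key : ∀ m (E : Finset (Fin n → Y)),
      ∑ v ∈ B m, ∑ y ∈ E, Wn W n (c v) y ≤ δ * #(B m) →
      ∑ x, (((k * k' : ℕ) : ℝ)⁻¹ * ∑ i, ∑ j, pushLaw c (unifOn (B m ∩ B' i ∩ B'' j)) x)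
        * ∑ y ∈ E, Wn W n x y ≤ l := by
    intro m E hE
    have h1 := hB'.sum_unifOn_inter_le hB'' (hne m)
      (fun v => (sum_Wn_mem_Icc hW n (c v) E).1) (fun v => (sum_Wn_mem_Icc hW n (c v) E).2) hE
    rw [hr m] at h1
    simp only [Fintype.card_fin] at h1
    have h2 : ∑ x, (((k * k' : ℕ) : ℝ)⁻¹ * ∑ i, ∑ j, pushLaw c (unifOn (B m ∩ B' i ∩ B'' j)) x)
        * ∑ y ∈ E, Wn W n x y = ((k * k' : ℕ) : ℝ)⁻¹ * ∑ i, ∑ j, ∑ v,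
          unifOn (B m ∩ B' i ∩ B'' j) v * ∑ y ∈ E, Wn W n (c v) y := by
      simp_rw [mul_assoc, ← Finset.mul_sum, Finset.sum_mul]
      rw [Finset.sum_comm]
      congr 1
      refine Finset.sum_congr rfl fun i _ => ?_
      rw [Finset.sum_comm]
      exact Finset.sum_congr rfl fun j _ => sum_pushLaw_mul _ _ _
    rw [h2]
    calc _ ≤ ((k * k' : ℕ) : ℝ)⁻¹ * ((k : ℝ) * k' * l) := by
          gcongr
          exact h1.trans (by gcongr)
      _ ≤ l := by
          rw [← Nat.cast_mul, ← mul_assoc]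
          exact mul_le_of_le_one_left hpos.le (inv_mul_le_one)
  exact ⟨fun m => key m _ (h.1 m), fun m m' hm => key m _ (h.2 m m' hm)⟩

theorem isBC3IDCode_of_identifies {X Y1 Y2 Y3 V : Type*} [Fintype X] [Fintype Y1] [Fintype Y2]
    [Fintype Y3] [Fintype V] [Nonempty V] {W : X → Y1 → Y2 → Y3 → ℝ} (hW : IsBC3 W) {n : ℕ}
    {c : V → Fin n → X} {k1 k2 k3 : ℕ} {B1 : Fin k1 → Finset V} {B2 : Fin k2 → Finset V}
    {B3 : Fin k3 → Finset V} {ρ1 ρ2 ρ3 : ℝ} (h1 : IsPairwiseDesign B1 ρ1)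
    (h2 : IsPairwiseDesign B2 ρ2) (h3 : IsPairwiseDesign B3 ρ3) {D1 : Fin k1 → Finset (Fin n → Y1)}
    {D2 : Fin k2 → Finset (Fin n → Y2)} {D3 : Fin k3 → Finset (Fin n → Y3)} {δ l : ℝ} (hl : 0 < l)
    (i1 : Identifies n (marg1 W) c B1 D1 δ) (i2 : Identifies n (marg2 W) c B2 D2 δ)
    (i3 : Identifies n (marg3 W) c B3 D3 δ)
    (hδ : 2 * δ + 4 / (ρ1 * ρ2 * ρ3 * Fintype.card V) ≤ l) :
    IsBC3IDCode n k1 k2 k3 W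
      (fun m1 m2 m3 => pushLaw c (unifOn (B1 m1 ∩ B2 m2 ∩ B3 m3))) D1 D2 D3 l l l l l l := by
  have ne : ∀ {k : ℕ} {B : Fin k → Finset V} {ρ : ℝ}, IsPairwiseDesign B ρ → ∀ m,
      (B m).Nonempty := by
    intro k B ρ h m
    have : (0 : ℝ) < #(B m) := by
      rw [h.card_eq]
      have : (0 : ℝ) < Fintype.card V := by exact_mod_cast Fintype.card_pos
      exact mul_pos h.pos this
    exact Finset.card_pos.1 (by exact_mod_cast this)
  refine ⟨fun m1 m2 m3 => (isPMF_unifOn _).pushLaw c, ?_, ?_, ?_⟩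
  · have e : 2 * δ + 4 / (ρ2 * ρ3 * (ρ1 * Fintype.card V)) ≤ l := by
      convert hδ using 3; ring
    exact i1.idCodeErr hW.isChannel_marg1 (ne h1) h2 h3 h1.card_eq e hl
  · have e : 2 * δ + 4 / (ρ1 * ρ3 * (ρ2 * Fintype.card V)) ≤ l := by
      convert hδ using 3; ring
    have := i2.idCodeErr hW.isChannel_marg2 (ne h2) h1 h3 h2.card_eq e hl
    convert this using 9 with m x i j
    exact Finset.inter_comm _ _
  · have e : 2 * δ + 4 / (ρ1 * ρ2 * (ρ3 * Fintype.card V)) ≤ l := by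
      convert hδ using 3; ring
    have := i3.idCodeErr hW.isChannel_marg3 (ne h3) h1 h2 h3.card_eq e hl
    convert this using 8 with m x i j
    rw [Finset.inter_comm, Finset.inter_assoc]

/-- The outputs whose information density with the input word `x` is at least `n (I(P,W) - ε)`. -/
def typSet {X Y : Type*} [Fintype X] [Fintype Y] (n : ℕ) (W : X → Y → ℝ) (P : X → ℝ) (ε : ℝ)
    (x : Fin n → X) : Finset (Fin n → Y) :=
  {y | Real.exp (n * (mutInf P W - ε)) * ∏ i, outLaw P W (y i) ≤ Wn W n x y}

theorem sum_pi_mul_Wn {X Y : Type*} [Fintype X] {W : X → Y → ℝ} {P : X → ℝ} (n : ℕ)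
    (y : Fin n → Y) : ∑ x : Fin n → X, (∏ i, P (x i)) * Wn W n x y = ∏ i, outLaw P W (y i) := by
  simp only [Wn, ← Finset.prod_mul_distrib]
  exact sum_pi_prod fun i x => P x * W x (y i)

section Typical

variable {X Y : Type*} [Fintype X] [Fintype Y] {W : X → Y → ℝ} {P : X → ℝ}

theorem sum_pi_mul_typSet_le (hW : IsChannel W) (n : ℕ) (ε : ℝ) (x' : Fin n → X) :
    ∑ x : Fin n → X, (∏ i, P (x i)) * ∑ y ∈ typSet n W P ε x', Wn W n x y
      ≤ Real.exp (-(n * (mutInf P W - ε))) := by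
  simp_rw [Finset.mul_sum]
  rw [Finset.sum_comm]
  simp_rw [sum_pi_mul_Wn]
  rw [Real.exp_neg, ← one_div, le_div_iff₀' (Real.exp_pos _), Finset.mul_sum]
  calc _ ≤ ∑ y ∈ typSet n W P ε x', Wn W n x' y :=
        Finset.sum_le_sum fun y hy => (Finset.mem_filter.1 hy).2
    _ ≤ 1 := (sum_Wn_mem_Icc hW n x' _).2

theorem sum_pi_mul_compl_typSet_le (hW : IsChannel W) (hP : IsPMF P) {n : ℕ} (hn : 0 < n) {ε : ℝ}
    (hε : 0 < ε) :
    ∑ x : Fin n → X, (∏ i, P (x i)) * ∑ y ∈ (typSet n W P ε x)ᶜ, Wn W n x y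
      ≤ 8 * (Fintype.card X * Fintype.card Y) / (n * ε ^ 2) := by
  set p : Fin n → X × Y → ℝ := fun _ a => P a.1 * W a.1 a.2 with hp
  have hpp : ∀ i, IsPMF (p i) := fun i =>
    ⟨fun a => mul_nonneg (hP.1 _) (hW.1 _ _), by
      simp only [hp, Fintype.sum_prod_type, ← Finset.mul_sum, hW.2, mul_one, hP.2]⟩
  set g : Fin n → X × Y → ℝ := fun _ a => Real.log (W a.1 a.2 / outLaw P W a.2) with hg
  have hn' : (0 : ℝ) < n := by exact_mod_cast hn
  have hmean : ∑ i, ∑ a, p i a * g i a = n * mutInf P W := by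
    rw [mutInf_eq_sum_log]
    simp [hp, hg, Fintype.sum_prod_type, Finset.mul_sum, mul_assoc]
  have hvar : ∑ i, ∑ a, p i a * g i a ^ 2 ≤ n * (8 * (Fintype.card X * Fintype.card Y)) := by
    have h := sum_log_sq_le hP hW
    have : ∑ i, ∑ a, p i a * g i a ^ 2
        = n * ∑ x, P x * ∑ y, W x y * Real.log (W x y / outLaw P W y) ^ 2 := by
      simp [hp, hg, Fintype.sum_prod_type, Finset.mul_sum, mul_assoc]
    rw [this]; gcongr
  have hcheb := sum_pi_chebyshev hpp g (t := n * ε) (by positivity)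
  rw [hmean] at hcheb
  have hb : (∑ i, ∑ a, p i a * g i a ^ 2) / (n * ε) ^ 2
      ≤ 8 * (Fintype.card X * Fintype.card Y) / (n * ε ^ 2) := by
    calc _ ≤ n * (8 * (Fintype.card X * Fintype.card Y)) / (n * ε) ^ 2 := by gcongr
      _ = _ := by field_simp
  refine le_trans ?_ (hcheb.trans hb)
  have hlhs : ∑ x : Fin n → X, (∏ i, P (x i)) * ∑ y ∈ (typSet n W P ε x)ᶜ, Wn W n x y
      = ∑ c : Fin n → X × Y with (fun i => (c i).2) ∉ typSet n W P ε (fun i => (c i).1),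
        ∏ i, p i (c i) := by
    rw [Finset.sum_filter,
      ← (Equiv.arrowProdEquivProdArrow (Fin n) (fun _ => X) (fun _ => Y)).symm.sum_comp,
      Fintype.sum_prod_type]
    refine Finset.sum_congr rfl fun x _ => ?_
    rw [Finset.compl_eq_univ_sdiff, ← Finset.filter_notMem_eq_sdiff, Finset.sum_filter,
      Finset.mul_sum]
    refine Finset.sum_congr rfl fun y _ => ?_
    simp only [Equiv.arrowProdEquivProdArrow, Equiv.coe_fn_symm_mk, hp, Wn,
      Finset.prod_mul_distrib, mul_ite, mul_zero]
  rw [hlhs]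
  have hsub : ∀ c : Fin n → X × Y, (fun i => (c i).2) ∉ typSet n W P ε (fun i => (c i).1) →
      ¬ (n * ε ≤ |∑ i, g i (c i) - n * mutInf P W|) → ∏ i, p i (c i) = 0 := by
    intro c hc hnot
    by_contra hne
    apply hnot
    have hpi : ∀ i, 0 < P (c i).1 * W (c i).1 (c i).2 := fun i =>
      lt_of_le_of_ne ((hpp i).1 _) fun h => hne (Finset.prod_eq_zero (Finset.mem_univ i) h.symm)
    have hWi : ∀ i, 0 < W (c i).1 (c i).2 := fun i =>
      pos_of_mul_pos_right (hpi i) (hP.1 _)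
    have houti : ∀ i, 0 < outLaw P W (c i).2 := fun i =>
      (hpi i).trans_le (mul_le_outLaw hP.1 hW.1 _ _)
    have hlog := log_prod_div Finset.univ (fun i _ => hWi i) (fun i _ => houti i)
    have hpos : 0 < ∏ i, outLaw P W (c i).2 := Finset.prod_pos fun i _ => houti i
    simp only [typSet, Finset.mem_filter, Finset.mem_univ, true_and, not_le] at hc
    have hWpos : 0 < ∏ i, W (c i).1 (c i).2 := Finset.prod_pos fun i _ => hWi i
    have h2 := Real.log_lt_log hWpos hc
    rw [Real.log_mul (Real.exp_pos _).ne' hpos.ne', Real.log_exp] at h2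
    rw [abs_sub_comm]
    refine le_trans ?_ (le_abs_self _)
    change _ ≤ _ - ∑ i, Real.log (W (c i).1 (c i).2 / outLaw P W (c i).2)
    rw [hlog]
    linarith
  rw [Finset.sum_filter, Finset.sum_filter]
  refine Finset.sum_le_sum fun c _ => ?_
  have h0 : 0 ≤ ∏ i, p i (c i) := Finset.prod_nonneg fun i _ => (hpp i).1 _
  by_cases hc : (fun i => (c i).2) ∈ typSet n W P ε (fun i => (c i).1)
  · rw [if_neg (not_not.2 hc)]
    split_ifs <;> simp [h0]
  · rw [if_pos hc]
    by_cases h : n * ε ≤ |∑ i, g i (c i) - n * mutInf P W|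
    · rw [if_pos h]
    · rw [if_neg h, hsub c hc h]

/-- The input words that are missed by their typical set with probability at most `δ`. -/
def goodWords (n : ℕ) (W : X → Y → ℝ) (P : X → ℝ) (ε δ : ℝ) : Finset (Fin n → X) :=
  {x | ∑ y ∈ (typSet n W P ε x)ᶜ, Wn W n x y ≤ δ}

theorem sum_compl_goodWords_le (hW : IsChannel W) (hP : IsPMF P) {n : ℕ} (hn : 0 < n) {ε δ : ℝ}
    (hε : 0 < ε) (hδ : 0 < δ) :
    ∑ x ∈ (goodWords n W P ε δ)ᶜ, ∏ i, P (x i)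
      ≤ 8 * (Fintype.card X * Fintype.card Y) / (n * ε ^ 2) / δ := by
  rw [le_div_iff₀ hδ]
  refine le_trans ?_ (sum_pi_mul_compl_typSet_le hW hP hn hε)
  rw [Finset.sum_mul]
  have h0 : ∀ x : Fin n → X, 0 ≤ ∏ i, P (x i) := fun x => Finset.prod_nonneg fun i _ => hP.1 _
  calc _ ≤ ∑ x ∈ (goodWords n W P ε δ)ᶜ,
            (∏ i, P (x i)) * ∑ y ∈ (typSet n W P ε x)ᶜ, Wn W n x y := by
        refine Finset.sum_le_sum fun x hx => mul_le_mul_of_nonneg_left ?_ (h0 x)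
        simp only [goodWords, Finset.mem_compl, Finset.mem_filter, Finset.mem_univ, true_and,
          not_le] at hx
        exact hx.le
    _ ≤ _ := Finset.sum_le_sum_of_subset_of_nonneg (Finset.subset_univ _) fun x _ _ =>
        mul_nonneg (h0 x) (sum_Wn_mem_Icc hW n x _).1

end Typical

theorem exp_le_one_add_two_mul {z : ℝ} (h0 : 0 ≤ z) (h1 : z ≤ 1) : Real.exp z ≤ 1 + 2 * z := by
  have := Real.abs_exp_sub_one_le (x := z) (by rwa [abs_of_nonneg h0])
  rw [abs_of_nonneg h0] at this
  linarith [le_abs_self (Real.exp z - 1)]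

/-- Exponential moment of a sum over the random points indexed by `T`, where the summand may depend
on the points outside `T`. -/
theorem sum_pi_mul_exp_le {V A : Type*} [Fintype V] [Fintype A] {π : A → ℝ}
    (hπ : IsPMF π) (T : Finset V) (g : ({v // v ∉ T} → A) → A → ℝ) (h0 : ∀ c a, 0 ≤ g c a)
    (h1 : ∀ c a, g c a ≤ 1) {σ : ℝ} (hσ : ∀ c, ∑ a, π a * g c a ≤ σ) :
    ∑ c : V → A, (∏ v, π (c v)) * Real.exp (∑ v ∈ T, g (fun u => c u) (c v))
      ≤ (1 + 2 * σ) ^ #T := by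
  have e : ∀ c : V → A, (∏ v, π (c v)) * Real.exp (∑ v ∈ T, g (fun u => c u) (c v))
      = (∏ v : {v // v ∉ T}, π (c v)) *
        ∏ v : {v // v ∈ T}, π (c v) * Real.exp (g (fun u => c u) (c v)) := by
    intro c
    rw [Finset.prod_mul_distrib, ← Real.exp_sum, ← mul_assoc, Finset.sum_coe_sort T
      (fun v => g (fun u => c u) (c v))]
    congr 1
    rw [mul_comm]
    convert (Fintype.prod_subtype_mul_prod_subtype (fun v => v ∈ T) (fun v => π (c v))).symm
  simp_rw [e]
  rw [← (Equiv.piEquivPiSubtypeProd (fun v => v ∈ T) (fun _ => A)).symm.sum_comp,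
    Fintype.sum_prod_type_right]
  have hPi : IsPMF (fun c : {v // v ∉ T} → A => ∏ v, π (c v)) := IsPMF.pi fun _ => hπ
  have hσ0 : ∀ c, 0 ≤ ∑ a, π a * g c a := fun c =>
    Finset.sum_nonneg fun a _ => mul_nonneg (hπ.1 a) (h0 c a)
  calc _ = ∑ c : {v // v ∉ T} → A, (∏ v, π (c v)) *
        ∏ _v : {v // v ∈ T}, ∑ a, π a * Real.exp (g c a) := by
        refine Finset.sum_congr rfl fun c _ => ?_
        rw [← sum_pi_prod, Finset.mul_sum]
        refine Finset.sum_congr rfl fun c' _ => ?_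
        congr 1
        · refine Finset.prod_congr rfl fun v _ => ?_
          simp [Equiv.piEquivPiSubtypeProd, v.2]
        · refine Finset.prod_congr rfl fun v _ => ?_
          have : (fun u : {v // v ∉ T} => (Equiv.piEquivPiSubtypeProd (fun v => v ∈ T)
              (fun _ => A)).symm (c', c) u) = c := by
            funext u; simp [Equiv.piEquivPiSubtypeProd, u.2]
          rw [this]
          simp [Equiv.piEquivPiSubtypeProd]
    _ ≤ ∑ c : {v // v ∉ T} → A, (∏ v, π (c v)) * (1 + 2 * σ) ^ #T := by
        refine Finset.sum_le_sum fun c _ => mul_le_mul_of_nonneg_left ?_ (hPi.1 c)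
        rw [Finset.prod_const, Finset.card_univ, Fintype.card_coe]
        refine pow_le_pow_left₀ (Finset.sum_nonneg fun a _ =>
          mul_nonneg (hπ.1 a) (Real.exp_nonneg _)) ?_ _
        calc _ ≤ ∑ a, π a * (1 + 2 * g c a) := Finset.sum_le_sum fun a _ =>
              mul_le_mul_of_nonneg_left (exp_le_one_add_two_mul (h0 c a) (h1 c a)) (hπ.1 a)
          _ = 1 + 2 * ∑ a, π a * g c a := by
              simp_rw [mul_add, mul_one, Finset.sum_add_distrib, hπ.2, Finset.mul_sum]
              congr 1; exact Finset.sum_congr rfl fun a _ => by ring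
          _ ≤ _ := by have := hσ c; linarith
    _ = _ := by rw [← Finset.sum_mul, hPi.2, one_mul]

section Decoder

variable {X Y V : Type*} [Fintype X] [Fintype Y] {W : X → Y → ℝ} {P : X → ℝ}

/-- Union of the typical sets of the codewords indexed by `S`. -/
def unionDecoder (n : ℕ) (W : X → Y → ℝ) (P : X → ℝ) (ε : ℝ) (c : V → Fin n → X) (S : Finset V) :
    Finset (Fin n → Y) :=
  {y | ∃ u ∈ S, y ∈ typSet n W P ε (c u)}

/-- Total exponential score of the events that a wrong message is identified with probability
larger than `δ`, not counting the codewords that two messages share. -/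
def falseIdScore {k : ℕ} (n : ℕ) (W : X → Y → ℝ) (P : X → ℝ) (ε δ b : ℝ) (B : Fin k → Finset V)
    (c : V → Fin n → X) : ℝ :=
  ∑ m, ∑ m', if m = m' then 0 else
    Real.exp (∑ v ∈ B m \ B m', ∑ y ∈ unionDecoder n W P ε c (B m'), Wn W n (c v) y - δ * b)

theorem falseIdScore_nonneg {k : ℕ} (n : ℕ) (ε δ b : ℝ) (B : Fin k → Finset V)
    (c : V → Fin n → X) : 0 ≤ falseIdScore n W P ε δ b B c :=
  Finset.sum_nonneg fun m _ => Finset.sum_nonneg fun m' _ => by split_ifs <;> positivity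

theorem identifies_unionDecoder (hW : IsChannel W) {n : ℕ} {ε δ b : ℝ} (hδ : 0 ≤ δ) {k : ℕ}
    {B : Fin k → Finset V} (hb : ∀ m, (#(B m) : ℝ) = b)
    (hint : ∀ m m', m ≠ m' → (#(B m ∩ B m') : ℝ) ≤ δ * b) {c : V → Fin n → X}
    (hgood : ∀ v, c v ∈ goodWords n W P ε δ) (hs : falseIdScore n W P ε δ b B c < 1) :
    Identifies n W c B (fun m => unionDecoder n W P ε c (B m)) (2 * δ) := by
  constructor
  · intro m
    calc _ ≤ ∑ v ∈ B m, δ := by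
          refine Finset.sum_le_sum fun v hv => ?_
          have := hgood v
          simp only [goodWords, Finset.mem_filter, Finset.mem_univ, true_and] at this
          refine le_trans (Finset.sum_le_sum_of_subset_of_nonneg ?_
            fun y _ _ => (hW.Wn n).1 _ _) this
          refine Finset.compl_subset_compl.2 fun y hy => ?_
          simp only [unionDecoder, Finset.mem_filter, Finset.mem_univ, true_and]
          exact ⟨v, hv, hy⟩
      _ = δ * #(B m) := by rw [Finset.sum_const, nsmul_eq_mul, mul_comm]
      _ ≤ 2 * δ * #(B m) := by gcongr; linarith
  · intro m m' hm
    have h1 : ∑ v ∈ B m ∩ B m', ∑ y ∈ unionDecoder n W P ε c (B m'), Wn W n (c v) y ≤ δ * b := by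
      refine le_trans ?_ (hint m m' hm)
      calc _ ≤ ∑ v ∈ B m ∩ B m', (1 : ℝ) :=
            Finset.sum_le_sum fun v _ => (sum_Wn_mem_Icc hW n _ _).2
        _ = _ := by simp
    have h2 : ∑ v ∈ B m \ B m', ∑ y ∈ unionDecoder n W P ε c (B m'), Wn W n (c v) y ≤ δ * b := by
      have h3 : Real.exp (∑ v ∈ B m \ B m', ∑ y ∈ unionDecoder n W P ε c (B m'), Wn W n (c v) y
          - δ * b) ≤ falseIdScore n W P ε δ b B c := by
        have h4 : ∀ m m', 0 ≤ (if m = m' then 0 else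
            Real.exp (∑ v ∈ B m \ B m', ∑ y ∈ unionDecoder n W P ε c (B m'), Wn W n (c v) y
              - δ * b)) := fun m m' => by split_ifs <;> positivity
        have h5 := Finset.single_le_sum (f := fun m' => if m = m' then 0 else
            Real.exp (∑ v ∈ B m \ B m', ∑ y ∈ unionDecoder n W P ε c (B m'), Wn W n (c v) y
              - δ * b)) (fun m' _ => h4 m m') (Finset.mem_univ m')
        simp only [hm, if_false] at h5
        refine h5.trans ?_
        exact Finset.single_le_sum (f := fun m => ∑ m', if m = m' then 0 else
            Real.exp (∑ v ∈ B m \ B m', ∑ y ∈ unionDecoder n W P ε c (B m'), Wn W n (c v) y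
              - δ * b)) (fun m _ => Finset.sum_nonneg fun m' _ => h4 m m') (Finset.mem_univ m)
      have := Real.exp_lt_one_iff.1 (h3.trans_lt hs)
      linarith
    have h6 := Finset.sum_inter_add_sum_sdiff (B m) (B m')
      (fun v => ∑ y ∈ unionDecoder n W P ε c (B m'), Wn W n (c v) y)
    rw [← h6, hb m]
    linarith

theorem sum_pi_mul_falseIdScore_le [Fintype V] (hW : IsChannel W) {n : ℕ} {ε δ τ : ℝ} {k b : ℕ}
    {B : Fin k → Finset V} (hb : ∀ m, #(B m) = b) {π : (Fin n → X) → ℝ} (hπ : IsPMF π)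
    (hτ : ∀ x', ∑ x, π x * ∑ y ∈ typSet n W P ε x', Wn W n x y ≤ τ) :
    ∑ c : V → Fin n → X, (∏ v, π (c v)) * falseIdScore n W P ε δ b B c
      ≤ k ^ 2 * Real.exp (2 * b ^ 2 * τ - δ * b) := by
  obtain ⟨x0⟩ : Nonempty (Fin n → X) := by
    by_contra h
    rw [not_nonempty_iff] at h
    simpa using hπ.2
  have hτ0 : 0 ≤ τ := (Finset.sum_nonneg fun x _ =>
    mul_nonneg (hπ.1 x) (sum_Wn_mem_Icc hW n x _).1).trans (hτ x0)
  have key : ∀ m m', ∑ c : V → Fin n → X, (∏ v, π (c v)) * (if m = m' then 0 else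
      Real.exp (∑ v ∈ B m \ B m', ∑ y ∈ unionDecoder n W P ε c (B m'), Wn W n (c v) y - δ * b))
      ≤ Real.exp (2 * b ^ 2 * τ - δ * b) := by
    intro m m'
    by_cases hm : m = m'
    · simp only [hm, if_true, mul_zero, Finset.sum_const_zero]; positivity
    simp only [hm, if_false]
    set T := B m \ B m' with hT
    set E : ({v // v ∉ T} → Fin n → X) → Finset (Fin n → Y) := fun c =>
      {y | ∃ u : {v // v ∉ T}, (u : V) ∈ B m' ∧ y ∈ typSet n W P ε (c u)} with hE
    have hEc : ∀ c : V → Fin n → X,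
        E (fun u => c u) = unionDecoder n W P ε c (B m') := by
      intro c
      ext y
      simp only [hE, unionDecoder, Finset.mem_filter, Finset.mem_univ, true_and]
      constructor
      · rintro ⟨u, hu, hy⟩; exact ⟨u, hu, hy⟩
      · rintro ⟨u, hu, hy⟩
        exact ⟨⟨u, by simp [hT, hu]⟩, hu, hy⟩
    have hσ : ∀ c, ∑ a, π a * ∑ y ∈ E c, Wn W n a y ≤ b * τ := by
      intro c
      have h1 : ∀ a, ∑ y ∈ E c, Wn W n a y
          ≤ ∑ u : {v // v ∉ T}, if (u : V) ∈ B m' then ∑ y ∈ typSet n W P ε (c u), Wn W n a y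
            else 0 := by
        intro a
        have h2 : ∀ u : {v // v ∉ T}, (if (u : V) ∈ B m' then
            ∑ y ∈ typSet n W P ε (c u), Wn W n a y else 0)
            = ∑ y, if (u : V) ∈ B m' ∧ y ∈ typSet n W P ε (c u) then Wn W n a y else 0 := by
          intro u
          by_cases hu : (u : V) ∈ B m' <;> simp [hu]
        simp_rw [h2]
        rw [Finset.sum_comm, Finset.sum_filter]
        refine Finset.sum_le_sum fun y _ => ?_
        have h3 : ∀ u : {v // v ∉ T}, 0 ≤ (if (u : V) ∈ B m' ∧ y ∈ typSet n W P ε (c u)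
            then Wn W n a y else 0) := fun u => by
          have := (hW.Wn n).1 a y
          split_ifs <;> simp [this]
        split_ifs with h
        · obtain ⟨u, hu⟩ := h
          have := Finset.single_le_sum (f := fun u : {v // v ∉ T} => if (u : V) ∈ B m' ∧
            y ∈ typSet n W P ε (c u) then Wn W n a y else 0) (fun u _ => h3 u) (Finset.mem_univ u)
          simpa [hu] using this
        · exact Finset.sum_nonneg fun u _ => h3 u
      calc _ ≤ ∑ a, π a * ∑ u : {v // v ∉ T}, (if (u : V) ∈ B m' then
            ∑ y ∈ typSet n W P ε (c u), Wn W n a y else 0) :=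
            Finset.sum_le_sum fun a _ => mul_le_mul_of_nonneg_left (h1 a) (hπ.1 a)
        _ = ∑ u : {v // v ∉ T}, if (u : V) ∈ B m' then
            ∑ a, π a * ∑ y ∈ typSet n W P ε (c u), Wn W n a y else 0 := by
            simp_rw [Finset.mul_sum]
            rw [Finset.sum_comm]
            refine Finset.sum_congr rfl fun u _ => ?_
            split_ifs <;> simp [Finset.mul_sum]
        _ ≤ ∑ u : {v // v ∉ T}, if (u : V) ∈ B m' then τ else 0 := by
            refine Finset.sum_le_sum fun u _ => ?_
            split_ifs
            · exact hτ _
            · exact le_rfl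
        _ ≤ ∑ u : V, if u ∈ B m' then τ else 0 := by
            rw [← Finset.sum_subtype (Finset.univ.filter (· ∉ T)) (by simp)
              (fun u => if u ∈ B m' then τ else 0)]
            exact Finset.sum_le_sum_of_subset_of_nonneg (Finset.subset_univ _)
              fun u _ _ => by split_ifs; exacts [hτ0, le_rfl]
        _ = b * τ := by rw [Finset.sum_ite_mem, Finset.univ_inter, Finset.sum_const, hb,
                          nsmul_eq_mul]
    have hmain := sum_pi_mul_exp_le hπ T (fun c a => ∑ y ∈ E c, Wn W n a y)
      (fun c a => (sum_Wn_mem_Icc hW n a _).1) (fun c a => (sum_Wn_mem_Icc hW n a _).2) hσ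
    simp only [hEc] at hmain
    have hTb : #T ≤ b := by
      rw [← hb m]; exact Finset.card_le_card Finset.sdiff_subset
    calc _ = (∑ c : V → Fin n → X, (∏ v, π (c v)) *
          Real.exp (∑ v ∈ T, ∑ y ∈ unionDecoder n W P ε c (B m'), Wn W n (c v) y))
          * Real.exp (-(δ * b)) := by
          rw [Finset.sum_mul]
          refine Finset.sum_congr rfl fun c _ => ?_
          rw [sub_eq_add_neg, Real.exp_add, mul_assoc]
      _ ≤ (1 + 2 * (b * τ)) ^ #T * Real.exp (-(δ * b)) := by gcongr
      _ ≤ (1 + 2 * (b * τ)) ^ b * Real.exp (-(δ * b)) := by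
          gcongr
          have : 0 ≤ b * τ := by positivity
          linarith
      _ ≤ Real.exp (2 * (b * τ)) ^ b * Real.exp (-(δ * b)) := by
          gcongr
          rw [add_comm]; exact Real.add_one_le_exp _
      _ = _ := by
          rw [← Real.exp_nat_mul, ← Real.exp_add]; congr 1; ring
  unfold falseIdScore
  simp_rw [Finset.mul_sum]
  rw [Finset.sum_comm]
  calc _ = ∑ m, ∑ m', ∑ c : V → Fin n → X, (∏ v, π (c v)) * (if m = m' then 0 else
      Real.exp (∑ v ∈ B m \ B m', ∑ y ∈ unionDecoder n W P ε c (B m'), Wn W n (c v) y - δ * b)) :=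
        Finset.sum_congr rfl fun m _ => Finset.sum_comm
    _ ≤ ∑ m : Fin k, ∑ m' : Fin k, Real.exp (2 * b ^ 2 * τ - δ * b) :=
        Finset.sum_le_sum fun m _ => Finset.sum_le_sum fun m' _ => key m m'
    _ = _ := by simp; ring

end Decoder

/-- Conditioning on a set of probability at least one half at most doubles the probabilities. -/
theorem IsPMF.exists_cond {A : Type*} [Fintype A] [DecidableEq A] {p : A → ℝ} (hp : IsPMF p)
    {G : Finset A} (hG : ∑ x ∈ Gᶜ, p x ≤ 1 / 2) :
    ∃ π : A → ℝ, IsPMF π ∧ (∀ x, π x ≤ 2 * p x) ∧ ∀ x, 0 < π x → x ∈ G := by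
  have hs : 1 / 2 ≤ ∑ x ∈ G, p x := by
    have := Finset.sum_add_sum_compl G p
    rw [hp.2] at this
    linarith
  have hs0 : 0 < ∑ x ∈ G, p x := by linarith
  refine ⟨fun x => if x ∈ G then p x / ∑ x ∈ G, p x else 0, ⟨fun x => ?_, ?_⟩, fun x => ?_,
    fun x hx => ?_⟩
  · dsimp only
    split_ifs
    · exact div_nonneg (hp.1 x) hs0.le
    · exact le_rfl
  · rw [Finset.sum_ite_mem, Finset.univ_inter, ← Finset.sum_div, div_self hs0.ne']
  · dsimp only
    have := hp.1 x
    split_ifs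
    · rw [div_le_iff₀ hs0]
      nlinarith
    · positivity
  · by_contra h
    simp [h] at hx

/-- Random codewords drawn from the pool `V` serve the receiver `W` with rate `R` and error `δ`,
unless a bad event of small probability occurs; the message sets have relative size `ρ`. -/
def PoolServes {X Y : Type*} [Fintype X] [Fintype Y] (n : ℕ) (W : X → Y → ℝ) (P : X → ℝ)
    (V : Type*) [Fintype V] (δ R ρ : ℝ) : Prop :=
  ∃ (k : ℕ) (B : Fin k → Finset V) (G : Finset (Fin n → X)) (Φ : (V → Fin n → X) → ℝ),
    IsPairwiseDesign B ρ ∧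
    ((0 < R → R ≤ (1 / n) * Real.log (Real.log k)) ∧ (R = 0 → k = 1)) ∧
    (∑ x ∈ Gᶜ, ∏ i, P (x i) ≤ 1 / 6) ∧ (∀ c, 0 ≤ Φ c) ∧
    (∀ π : (Fin n → X) → ℝ, IsPMF π → (∀ x, π x ≤ 2 * ∏ i, P (x i)) →
      ∑ c : V → Fin n → X, (∏ v, π (c v)) * Φ c ≤ 1 / 4) ∧
    ∀ c, Φ c < 1 → (∀ v, c v ∈ G) → ∃ D, Identifies n W c B D δ

theorem exists_bc3Code_of_poolServes {X Y1 Y2 Y3 V : Type*} [Fintype X] [Fintype Y1] [Fintype Y2]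
    [Fintype Y3] [Fintype V] [Nonempty V] {W : X → Y1 → Y2 → Y3 → ℝ} (hW : IsBC3 W) {P : X → ℝ}
    (hP : IsPMF P) {n : ℕ} {δ R1 R2 R3 ρ1 ρ2 ρ3 l : ℝ} (hl : 0 < l)
    (s1 : PoolServes n (marg1 W) P V δ R1 ρ1) (s2 : PoolServes n (marg2 W) P V δ R2 ρ2)
    (s3 : PoolServes n (marg3 W) P V δ R3 ρ3)
    (hδ : 2 * δ + 4 / (ρ1 * ρ2 * ρ3 * Fintype.card V) ≤ l) :
    ∃ (k1 k2 k3 : ℕ) (Q : Fin k1 → Fin k2 → Fin k3 → (Fin n → X) → ℝ)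
      (D1 : Fin k1 → Finset (Fin n → Y1)) (D2 : Fin k2 → Finset (Fin n → Y2))
      (D3 : Fin k3 → Finset (Fin n → Y3)),
      IsBC3IDCode n k1 k2 k3 W Q D1 D2 D3 l l l l l l ∧
      ((0 < R1 → R1 ≤ (1 / n) * Real.log (Real.log k1)) ∧ (R1 = 0 → k1 = 1)) ∧
      ((0 < R2 → R2 ≤ (1 / n) * Real.log (Real.log k2)) ∧ (R2 = 0 → k2 = 1)) ∧
      ((0 < R3 → R3 ≤ (1 / n) * Real.log (Real.log k3)) ∧ (R3 = 0 → k3 = 1)) := by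
  obtain ⟨k1, B1, G1, Φ1, hB1, hR1, hG1, hΦ1, hE1, hD1⟩ := s1
  obtain ⟨k2, B2, G2, Φ2, hB2, hR2, hG2, hΦ2, hE2, hD2⟩ := s2
  obtain ⟨k3, B3, G3, Φ3, hB3, hR3, hG3, hΦ3, hE3, hD3⟩ := s3
  have hPn : IsPMF (fun x : Fin n → X => ∏ i, P (x i)) := IsPMF.pi fun _ => hP
  have hG : ∑ x ∈ (G1 ∩ G2 ∩ G3)ᶜ, ∏ i, P (x i) ≤ 1 / 2 := by
    rw [Finset.compl_inter, Finset.compl_inter]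
    have u : ∀ S T : Finset (Fin n → X), ∑ x ∈ S ∪ T, ∏ i, P (x i)
        ≤ ∑ x ∈ S, ∏ i, P (x i) + ∑ x ∈ T, ∏ i, P (x i) := by
      intro S T
      rw [← Finset.sum_union_inter]
      exact le_add_of_nonneg_right (Finset.sum_nonneg fun x _ => hPn.1 x)
    have := u (G1ᶜ ∪ G2ᶜ) G3ᶜ
    have := u G1ᶜ G2ᶜ
    linarith
  obtain ⟨π, hπ, hπ2, hπG⟩ := hPn.exists_cond hG
  have hsum : ∑ c : V → Fin n → X, (∏ v, π (c v)) * (Φ1 c + Φ2 c + Φ3 c) < 1 := by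
    simp_rw [mul_add, Finset.sum_add_distrib]
    have := hE1 π hπ hπ2
    have := hE2 π hπ hπ2
    have := hE3 π hπ hπ2
    linarith
  obtain ⟨c, hc, hlt⟩ := (IsPMF.pi (ι := V) fun _ => hπ).exists_lt_of_sum_lt hsum
  have hcG : ∀ v, c v ∈ G1 ∩ G2 ∩ G3 := fun v => hπG _ <|
    lt_of_le_of_ne (hπ.1 _) fun h => hc.ne' (Finset.prod_eq_zero (Finset.mem_univ v) h.symm)
  simp only [Finset.mem_inter] at hcG
  have := hΦ1 c
  have := hΦ2 c
  have := hΦ3 c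
  obtain ⟨D1, i1⟩ := hD1 c (by linarith) fun v => (hcG v).1.1
  obtain ⟨D2, i2⟩ := hD2 c (by linarith) fun v => (hcG v).1.2
  obtain ⟨D3, i3⟩ := hD3 c (by linarith) fun v => (hcG v).2
  have hcode := isBC3IDCode_of_identifies hW hB1 hB2 hB3 hl i1 i2 i3 hδ
  exact ⟨k1, k2, k3, _, D1, D2, D3, hcode, hR1, hR2, hR3⟩

theorem poolServes_zero {X Y : Type*} [Fintype X] [Fintype Y] {W : X → Y → ℝ} {P : X → ℝ}
    (n : ℕ) (V : Type*) [Fintype V] {δ : ℝ} (hδ : 0 ≤ δ) :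
    PoolServes n W P V δ 0 1 := by
  refine ⟨1, fun _ => univ, univ, fun _ => 0, ⟨one_pos, le_rfl, by simp, by simp, ?_⟩,
    ⟨by simp, by simp⟩, by simp, by simp, by simp, fun c _ _ => ⟨fun _ => univ, ?_, ?_⟩⟩
  · intro v v' _; simp
  · intro m
    simp only [Finset.compl_univ, Finset.sum_empty, Finset.sum_const_zero]
    positivity
  · intro m m' h
    exact absurd (Subsingleton.elim m m') h

theorem poolServes_of_design {X Y V : Type*} [Fintype X] [Fintype Y] [Fintype V] {W : X → Y → ℝ}
    (hW : IsChannel W) {P : X → ℝ} (hP : IsPMF P) {n : ℕ} (hn : 0 < n) {ε δ R ρ : ℝ} {k b : ℕ}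
    (hε : 0 < ε) (hδ : 0 < δ) (hR0 : 0 < R) (hR : R ≤ (1 / n) * Real.log (Real.log k))
    {B : Fin k → Finset V} (hB : IsPairwiseDesign B ρ) (hb : ∀ m, #(B m) = b)
    (hint : ∀ m m', m ≠ m' → (#(B m ∩ B m') : ℝ) ≤ δ * b)
    (hmiss : 8 * (Fintype.card X * Fintype.card Y) / (n * ε ^ 2) / δ ≤ 1 / 6)
    (hfalse : k ^ 2 * Real.exp (2 * b ^ 2 * (2 * Real.exp (-(n * (mutInf P W - ε)))) - δ * b)
      ≤ 1 / 4) :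
    PoolServes n W P V (2 * δ) R ρ := by
  refine ⟨k, B, goodWords n W P ε δ, falseIdScore n W P ε δ b B, hB,
    ⟨fun _ => hR, fun h => absurd h hR0.ne'⟩, (sum_compl_goodWords_le hW hP hn hε hδ).trans hmiss,
    falseIdScore_nonneg n ε δ b B, fun π hπ hπ2 => ?_, fun c hc hG =>
      ⟨_, identifies_unionDecoder hW hδ.le (fun m => congrArg _ (hb m)) hint hG hc⟩⟩
  refine (sum_pi_mul_falseIdScore_le hW hb hπ fun x' => ?_).trans hfalse
  calc _ ≤ ∑ x : Fin n → X, (2 * ∏ i, P (x i)) * ∑ y ∈ typSet n W P ε x', Wn W n x y :=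
        Finset.sum_le_sum fun x _ => mul_le_mul_of_nonneg_right (hπ2 x) (sum_Wn_mem_Icc hW n x _).1
    _ ≤ _ := by
        simp_rw [mul_assoc, ← Finset.mul_sum]
        gcongr
        exact sum_pi_mul_typSet_le hW n ε x'

theorem card_fiber_mul_card {G H : Type*} [AddCommGroup G] [AddCommGroup H] [Fintype G] [Fintype H]
    (f : G →+ H) (hf : Function.Surjective f) (t : H) :
    #{m | f m = t} * Fintype.card H = Fintype.card G := by
  have h := Finset.card_eq_sum_card_fiberwise (f := f) (s := univ) (t := univ)
    (fun _ _ => by simp)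
  have h2 : ∀ b, #{m | f m = b} = #{m | f m = t} := fun b =>
    AddMonoidHom.card_fiber_eq_of_mem_range f (hf b) (hf t)
  rw [Finset.sum_congr rfl fun b _ => h2 b, Finset.sum_const, Finset.card_univ, Finset.card_univ,
    smul_eq_mul] at h
  rw [h, mul_comm]

section Graph

variable {V U T M : Type*}

/-- The graphs of a family of maps `U → T`, as subsets of `V ≃ U × T`. -/
def graphFamily [Fintype V] (φ : V ≃ U × T) (f : U → M → T) (m : M) : Finset V :=
  {v | f (φ v).1 m = (φ v).2}

theorem card_graphFamily [Fintype V] [Fintype U] (φ : V ≃ U × T) (f : U → M → T) (m : M) :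
    #(graphFamily φ f m) = Fintype.card U := by
  rw [← Finset.card_univ]
  refine Finset.card_bij' (fun v _ => (φ v).1) (fun u _ => φ.symm (u, f u m)) (by simp) ?_ ?_ ?_
  · intro u _; simp [graphFamily]
  · intro v hv
    simp only [graphFamily, Finset.mem_filter, Finset.mem_univ, true_and] at hv
    simp [hv]
  · intro u _; simp

theorem card_graphFamily_inter_le [Fintype V] [Fintype U] (φ : V ≃ U × T) (f : U → M → T)
    (m m' : M) [DecidablePred fun u => f u m = f u m'] :
    #(graphFamily φ f m ∩ graphFamily φ f m') ≤ #{u | f u m = f u m'} := by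
  refine Finset.card_le_card_of_injOn (fun v => (φ v).1) ?_ ?_
  · intro v hv
    simp only [graphFamily, Finset.coe_inter, Finset.coe_filter, Finset.mem_univ, true_and,
      Set.mem_inter_iff, Set.mem_ofPred_eq] at hv ⊢
    rw [hv.1, hv.2]
  · intro v hv w hw hvw
    simp only [graphFamily, Finset.coe_inter, Finset.coe_filter, Finset.mem_univ, true_and,
      Set.mem_inter_iff, Set.mem_ofPred_eq] at hv hw hvw
    refine φ.injective (Prod.ext hvw ?_)
    rw [← hv.1, ← hw.1, hvw]

/-- Graphs of a pairwise independent family of maps form a pairwise design. -/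
theorem isPairwiseDesign_graphFamily [Fintype V] [Fintype U] [Fintype T] [Fintype M]
    [AddCommGroup T] [AddCommGroup M] (φ : V ≃ U × T) (f : U → M →+ T)
    (h1 : ∀ u, Function.Surjective (f u))
    (h2 : ∀ u u', u ≠ u' → Function.Surjective ((f u).prod (f u'))) :
    IsPairwiseDesign (graphFamily φ fun u m => f u m) (Fintype.card T : ℝ)⁻¹ := by
  have hT : (0 : ℝ) < Fintype.card T := by exact_mod_cast Fintype.card_pos
  have hT1 : (1 : ℝ) ≤ Fintype.card T := by exact_mod_cast Fintype.card_pos (α := T)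
  refine ⟨by positivity, inv_le_one_of_one_le₀ hT1, fun m => ?_, fun v => ?_, fun v v' hv => ?_⟩
  · rw [card_graphFamily, Fintype.card_congr φ, Fintype.card_prod]
    push_cast
    field_simp
  · have := card_fiber_mul_card (f (φ v).1) (h1 _) (φ v).2
    simp only [graphFamily, Finset.mem_filter, Finset.mem_univ, true_and]
    rw [← this]
    push_cast
    field_simp
  · simp only [graphFamily, Finset.mem_filter, Finset.mem_univ, true_and]
    by_cases hu : (φ v).1 = (φ v').1
    · rw [Finset.filter_false_of_mem]
      · simp; positivity
      · rintro m - ⟨e1, e2⟩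
        refine hv (φ.injective (Prod.ext hu ?_))
        rw [← e1, ← e2, hu]
    · have := card_fiber_mul_card _ (h2 _ _ hu) ((φ v).2, (φ v').2)
      simp only [AddMonoidHom.prod_apply, Prod.mk.injEq, Fintype.card_prod] at this
      rw [← this]
      push_cast
      apply le_of_eq
      field_simp

theorem IsPairwiseDesign.comp_equiv {M' : Type*} [Fintype V] [Fintype M] [Fintype M']
    {B : M → Finset V} {ρ : ℝ} (h : IsPairwiseDesign B ρ) (e : M' ≃ M) :
    IsPairwiseDesign (fun m => B (e m)) ρ := by
  have hc : ∀ (p : M → Prop) [DecidablePred p], #{m' | p (e m')} = #{m | p m} := fun p _ =>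
    Finset.card_bij' (fun m' _ => e m') (fun m _ => e.symm m) (by simp) (by simp) (by simp)
      (by simp)
  refine ⟨h.pos, h.le_one, fun m => h.card_eq _, fun v => ?_, fun v v' hv => ?_⟩
  · rw [hc (fun m => v ∈ B m), h.card_mem, Fintype.card_congr e]
  · rw [hc (fun m => v ∈ B m ∧ v' ∈ B m), Fintype.card_congr e]
    exact h.card_mem_mem v v' hv

end Graph

section Polynomial

variable {K : Type*} [Field K]

/-- Evaluation at `u` of an `e`-tuple of polynomials in `d` variables with individual degrees less
than `D`, as an additive map on the coefficients. -/
def polyEval {d e D : ℕ} (u : Fin d → K) :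
    (Fin e → (Fin d → Fin D) → K) →+ (Fin e → K) where
  toFun m j := ∑ s, m j s * ∏ i, u i ^ (s i : ℕ)
  map_zero' := by ext j; simp
  map_add' m m' := by ext j; simp [add_mul, Finset.sum_add_distrib]

theorem polyEval_surjective {d e D : ℕ} (hD : 0 < D) (u : Fin d → K) :
    Function.Surjective (polyEval (e := e) (D := D) u) := by
  intro t
  refine ⟨fun j s => if s = (fun _ => ⟨0, hD⟩) then t j else 0, ?_⟩
  ext j
  simp [polyEval]

theorem polyEval_prod_surjective {d e D : ℕ} (hD : 1 < D) {u u' : Fin d → K} (h : u ≠ u') :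
    Function.Surjective ((polyEval (e := e) (D := D) u).prod (polyEval u')) := by
  obtain ⟨i, hi⟩ := Function.ne_iff.1 h
  have hi' : u i - u' i ≠ 0 := sub_ne_zero.2 hi
  rintro ⟨t, t'⟩
  set s0 : Fin d → Fin D := fun _ => ⟨0, by omega⟩ with hs0
  set s1 : Fin d → Fin D := Function.update s0 i ⟨1, hD⟩ with hs1
  have hs : s1 ≠ s0 := by
    intro h
    have := congrFun h i
    simp [hs1, hs0] at this
  have hm1 : ∀ w : Fin d → K, ∏ l, w l ^ (s1 l : ℕ) = w i := by
    intro w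
    rw [Finset.prod_eq_single i]
    · simp [hs1]
    · intro l _ hl; simp [hs1, hs0, hl]
    · simp
  have hm0 : ∀ w : Fin d → K, ∏ l, w l ^ (s0 l : ℕ) = 1 := by
    intro w; simp [hs0]
  have hev : ∀ (w : Fin d → K) (a b : Fin e → K), polyEval (D := D) w
      (fun j s => (if s = s0 then a j else 0) + (if s = s1 then b j else 0))
      = fun j => a j + b j * w i := by
    intro w a b
    ext j
    simp only [polyEval, AddMonoidHom.coe_mk, ZeroHom.coe_mk, add_mul, Finset.sum_add_distrib,
      ite_mul, zero_mul, Finset.sum_ite_eq', Finset.mem_univ, if_true, hm0, hm1, mul_one]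
  refine ⟨fun j s => (if s = s0 then (t j - (t j - t' j) / (u i - u' i) * u i) else 0)
    + (if s = s1 then (t j - t' j) / (u i - u' i) else 0), ?_⟩
  rw [AddMonoidHom.prod_apply, hev, hev]
  refine Prod.ext ?_ ?_
  · ext j; simp
  · ext j; simp only; field_simp; ring

theorem card_polyEval_eq_le [Fintype K] {d e D : ℕ} {m m' : Fin e → (Fin d → Fin D) → K}
    (h : m ≠ m') :
    (#{u | polyEval u m = polyEval u m'} : ℝ) ≤ (d * D : ℕ) / Fintype.card K
      * (Fintype.card K : ℝ) ^ d := by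
  obtain ⟨j, hj⟩ := Function.ne_iff.1 h
  set a : (Fin d → Fin D) → K := fun s => m j s - m' j s with ha
  have ha0 : a ≠ 0 := fun h0 => hj (funext fun s => sub_eq_zero.1 (congrFun h0 s))
  set E : (Fin d → Fin D) → (Fin d →₀ ℕ) := fun s =>
    Finsupp.equivFunOnFinite.symm fun i => (s i : ℕ) with hE
  have hEinj : Function.Injective E := by
    intro s s' hs
    ext i
    have := DFunLike.congr_fun hs i
    simpa [hE] using this
  set p : MvPolynomial (Fin d) K := ∑ s, MvPolynomial.monomial (E s) (a s) with hp
  have hcoeff : ∀ s, p.coeff (E s) = a s := by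
    intro s
    rw [hp, MvPolynomial.coeff_sum, Finset.sum_eq_single s]
    · simp
    · intro s' _ hs'
      rw [MvPolynomial.coeff_monomial, if_neg (fun hh => hs' (hEinj hh))]
    · simp
  have hp0 : p ≠ 0 := by
    obtain ⟨s, hs⟩ := Function.ne_iff.1 ha0
    intro h0
    apply hs
    rw [← hcoeff s, h0]; simp
  have hdeg : p.totalDegree ≤ d * D := by
    refine MvPolynomial.totalDegree_finsetSum_le fun s _ => ?_
    refine (MvPolynomial.totalDegree_monomial_le _ _).trans ?_
    rw [Finsupp.sum_fintype _ _ (by simp)]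
    calc ∑ i, E s i ≤ ∑ _i : Fin d, D := Finset.sum_le_sum fun i _ => by simp [hE, (s i).2.le]
      _ = d * D := by simp
  have heval : ∀ u, MvPolynomial.eval u p = polyEval u m j - polyEval u m' j := by
    intro u
    simp only [hp, map_sum, MvPolynomial.eval_monomial, polyEval, AddMonoidHom.coe_mk,
      ZeroHom.coe_mk, ← Finset.sum_sub_distrib, ← sub_mul, ha]
    refine Finset.sum_congr rfl fun s _ => ?_
    rw [Finsupp.prod_fintype _ _ (by simp)]
    simp [hE]
  have hsz := MvPolynomial.schwartz_zippel_totalDegree hp0 (univ : Finset K)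
  have hK : (0 : ℝ) < Fintype.card K := by exact_mod_cast Fintype.card_pos
  have hsub : #{u | polyEval u m = polyEval u m'}
      ≤ #{f ∈ Fintype.piFinset fun _ => (univ : Finset K) | MvPolynomial.eval f p = 0} := by
    refine Finset.card_le_card fun u hu => ?_
    simp only [Finset.mem_filter, Finset.mem_univ, true_and] at hu
    simp [heval, hu]
  have hsz' : (#{f ∈ Fintype.piFinset fun _ => (univ : Finset K) | MvPolynomial.eval f p = 0} : ℝ)
      / (Fintype.card K : ℝ) ^ d ≤ p.totalDegree / Fintype.card K := by
    have : (((#{f ∈ Fintype.piFinset fun _ => (univ : Finset K) | MvPolynomial.eval f p = 0} : ℚ≥0)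
      / (#(univ : Finset K) ^ d : ℚ≥0) : ℚ≥0) : ℝ)
      ≤ ((p.totalDegree / #(univ : Finset K) : ℚ≥0) : ℝ) :=
      NNRat.cast_le.2 hsz
    push_cast at this
    rwa [Finset.card_univ] at this
  rw [div_le_iff₀ (by positivity)] at hsz'
  calc _ ≤ (#{f ∈ Fintype.piFinset fun _ => (univ : Finset K) |
        MvPolynomial.eval f p = 0} : ℝ) := by
        exact_mod_cast hsub
    _ ≤ _ := hsz'
    _ ≤ _ := by gcongr

end Polynomial

theorem poolServes_of_field {X Y K : Type*} [Fintype X] [Fintype Y] [Field K] [Fintype K]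
    {W : X → Y → ℝ} (hW : IsChannel W) {P : X → ℝ} (hP : IsPMF P) {n : ℕ} (hn : 0 < n)
    {ε δ R : ℝ} {d e D : ℕ} (hε : 0 < ε) (hδ : 0 < δ) (hR0 : 0 < R) (hD : 1 < D)
    (hR : R ≤ (1 / n) * Real.log (e * D ^ d * Real.log (Fintype.card K)))
    (hint : (d * D : ℕ) / (Fintype.card K : ℝ) ≤ δ)
    (hmiss : 8 * (Fintype.card X * Fintype.card Y) / (n * ε ^ 2) / δ ≤ 1 / 6)
    (hfalse : 2 * (e * D ^ d * Real.log (Fintype.card K))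
      + 2 * ((Fintype.card K : ℝ) ^ d) ^ 2 * (2 * Real.exp (-(n * (mutInf P W - ε))))
      - δ * (Fintype.card K : ℝ) ^ d ≤ -2) :
    PoolServes n W P (Fin (d + e) → K) (2 * δ) R ((Fintype.card K : ℝ) ^ e)⁻¹ := by
  set φ : (Fin (d + e) → K) ≃ (Fin d → K) × (Fin e → K) := (Fin.appendEquiv d e).symm with hφ
  set M := Fin e → (Fin d → Fin D) → K with hM
  have hdes := isPairwiseDesign_graphFamily φ (fun u => polyEval (e := e) (D := D) u)
    (polyEval_surjective (by omega)) (fun u u' h => polyEval_prod_surjective hD h)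
  have hdes' := hdes.comp_equiv (Fintype.equivFin M).symm
  have hlogM : Real.log (Fintype.card M) = e * D ^ d * Real.log (Fintype.card K) := by
    simp only [hM, Fintype.card_fun, Fintype.card_fin]
    push_cast
    rw [← pow_mul, Real.log_pow]
    push_cast
    ring
  have hMpos : (0 : ℝ) < Fintype.card M := by exact_mod_cast Fintype.card_pos
  have hcard : ∀ m : Fin (Fintype.card M), #(graphFamily φ (fun u (m : M) => polyEval u m)
      ((Fintype.equivFin M).symm m)) = Fintype.card K ^ d := by
    intro m
    rw [card_graphFamily]; simp
  have hT : ((Fintype.card (Fin e → K) : ℕ) : ℝ)⁻¹ = ((Fintype.card K : ℝ) ^ e)⁻¹ := by simp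
  rw [hT] at hdes'
  refine poolServes_of_design hW hP hn hε hδ hR0 (by rw [hlogM]; exact hR) hdes' hcard
    (fun m m' hm => ?_) hmiss ?_
  · have hne : (Fintype.equivFin M).symm m ≠ (Fintype.equivFin M).symm m' := fun h =>
      hm ((Fintype.equivFin M).symm.injective h)
    refine le_trans ?_ ((card_polyEval_eq_le hne).trans ?_)
    · exact Nat.cast_le.2 (card_graphFamily_inter_le _ _ _ _)
    · push_cast at hint ⊢
      gcongr
  · have h1 : ((Fintype.card M : ℕ) : ℝ) ^ 2 = Real.exp (2 * Real.log (Fintype.card M)) := by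
      rw [mul_comm, Real.exp_mul, Real.exp_log hMpos]
      norm_cast
    rw [h1, ← Real.exp_add, hlogM]
    calc _ ≤ Real.exp (-2) := by
          apply Real.exp_le_exp.2
          push_cast
          linarith
      _ ≤ 1 / 4 := by
          rw [Real.exp_neg, one_div]
          apply inv_anti₀ (by norm_num)
          have := Real.add_one_le_exp (1 : ℝ)
          have h2 : Real.exp 2 = Real.exp 1 * Real.exp 1 := by rw [← Real.exp_add]; norm_num
          rw [h2]; nlinarith

theorem eventually_mul_exp_neg_le {C c δ : ℝ} (hc : 0 < c) (hδ : 0 < δ) :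
    ∀ᶠ n : ℕ in Filter.atTop, C * ((n + 1) * Real.exp (-(c * n))) ≤ δ := by
  have h := (tendsto_pow_mul_exp_neg_nat 1 hc).const_mul C
  simp only [pow_one, mul_zero] at h
  exact h.eventually_le_const hδ

theorem eventually_poolServes {X Y : Type*} [Fintype X] [Fintype Y] {W : X → Y → ℝ}
    (hW : IsChannel W) {P : X → ℝ} (hP : IsPMF P) {K : ℕ → Type*} [∀ n, Field (K n)]
    [∀ n, Fintype (K n)] {θ : ℝ} (hθ : 0 < θ)
    (hlow : ∀ᶠ n : ℕ in Filter.atTop, Real.exp (n * θ) ≤ 2 * Fintype.card (K n))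
    (hupp : ∀ᶠ n : ℕ in Filter.atTop, (Fintype.card (K n) : ℝ) ≤ Real.exp (n * θ))
    {δ R : ℝ} {d e : ℕ} (he : 0 < e) (hδ : 0 < δ) (hR0 : 0 < R) (hR : R < d * θ)
    (hI : d * θ < mutInf P W) :
    ∀ᶠ n : ℕ in Filter.atTop, PoolServes n W P (Fin (d + e) → K n) δ R
      ((Fintype.card (K n) : ℝ) ^ e)⁻¹ := by
  have hd : 0 < d := by
    rcases Nat.eq_zero_or_pos d with rfl | h
    · simp at hR; linarith
    · exact h
  have hd' : (0 : ℝ) < d := by exact_mod_cast hd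
  set g := θ - R / d with hg
  have hg0 : 0 < g := by
    rw [hg, sub_pos, div_lt_iff₀ hd']; linarith
  set ε := (mutInf P W - d * θ) / 2 with hε
  have hε0 : 0 < ε := by rw [hε]; linarith
  set δ' := δ / 2 with hδ'
  have hδ0 : 0 < δ' := by positivity
  have e1 := eventually_mul_exp_neg_le (C := 4 * d) hg0 hδ0
  have e2 := eventually_mul_exp_neg_le (C := 4) hε0 (show 0 < δ' / 4 by positivity)
  have e3 := eventually_mul_exp_neg_le (C := 2 * e * θ * 4 ^ d) hg0 (show 0 < δ' / 4 by positivity)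
  have e4 := eventually_mul_exp_neg_le (C := 2) hθ (show 0 < δ' / 4 by positivity)
  have e5 : ∀ᶠ n : ℕ in Filter.atTop,
      8 * (Fintype.card X * Fintype.card Y) / (n * ε ^ 2) / δ' ≤ 1 / 6 := by
    have h1 : Filter.Tendsto
        (fun n : ℕ => 8 * (Fintype.card X * Fintype.card Y : ℝ) / ε ^ 2 / δ' / n) Filter.atTop
        (nhds 0) := tendsto_const_div_atTop_nhds_zero_nat _
    filter_upwards [h1.eventually_le_const (show (0 : ℝ) < 1 / 6 by norm_num)] with n hn
    refine le_trans (le_of_eq ?_) hn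
    rw [div_div, div_div, div_div]
    congr 1; ring
  have e6 : ∀ᶠ n : ℕ in Filter.atTop, 1 / θ * 2 ≤ n := by
    have := tendsto_natCast_atTop_atTop (R := ℝ)
    exact this.eventually_ge_atTop _
  filter_upwards [e1, e2, e3, e4, e5, e6, hlow, hupp, Filter.eventually_gt_atTop 0]
    with n h1 h2 h3 h4 h5 h6 hl hu hn
  set κ : ℝ := ((Fintype.card (K n) : ℕ) : ℝ) with hκ
  have hn' : (0 : ℝ) < n := by exact_mod_cast hn
  have hκ0 : 0 < κ := by rw [hκ]; exact_mod_cast Fintype.card_pos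
  set L := Real.exp (n * (R / d)) with hL
  set z := Real.exp (-(g * n)) with hz
  have hz0 : 0 < z := Real.exp_pos _
  have hz1 : z ≤ 1 := Real.exp_le_one_iff.2 (by have := mul_pos hg0 hn'; linarith)
  have hL1 : 1 < L := Real.one_lt_exp_iff.2 (by positivity)
  have hLz : L = Real.exp (n * θ) * z := by
    rw [hL, hz, ← Real.exp_add, hg]
    congr 1; ring
  have hLd : L ^ d = Real.exp (n * R) := by
    rw [hL, ← Real.exp_nat_mul]
    congr 1; field_simp
  set D := ⌈L⌉₊ with hDdef
  have hDL : L ≤ D := Nat.le_ceil L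
  have hD1 : 1 < D := by exact_mod_cast hL1.trans_le hDL
  have hDκ : (D : ℝ) ≤ 4 * κ * z := by
    have := Nat.ceil_lt_add_one (a := L) (by linarith)
    have h : (D : ℝ) ≤ 2 * L := by linarith
    rw [hLz] at h
    have := mul_le_mul_of_nonneg_right hl hz0.le
    linarith
  have hz' : ∀ {c w : ℝ}, 0 ≤ c → 0 ≤ w → c * w ≤ c * ((n + 1) * w) := fun hc hw =>
    mul_le_mul_of_nonneg_left (le_mul_of_one_le_left hw (by linarith)) hc
  have hκδ : 4 ≤ κ * δ' := by
    have h := (hz' zero_le_two (Real.exp_pos (-(θ * n))).le).trans h4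
    have h' : Real.exp (n * θ) * Real.exp (-(θ * n)) = 1 := by
      rw [← Real.exp_add, mul_comm, add_neg_cancel, Real.exp_zero]
    have := mul_le_mul_of_nonneg_left hl (Real.exp_pos (-(θ * n))).le
    have := mul_le_mul_of_nonneg_left h hκ0.le
    linarith
  have hlog0 : 1 ≤ Real.log κ := by
    rw [Real.le_log_iff_exp_le hκ0]
    have h : 2 ≤ n * θ := by
      rw [one_div, inv_mul_le_iff₀ hθ] at h6
      linarith
    have h2 : Real.exp 1 * Real.exp 1 ≤ Real.exp (n * θ) := by
      rw [← Real.exp_add]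
      exact Real.exp_le_exp.2 (by linarith)
    have := Real.add_one_le_exp (1 : ℝ)
    nlinarith
  have hlog1 : Real.log κ ≤ n * θ := (Real.log_le_iff_le_exp hκ0).2 hu
  have hκ1 : 1 ≤ κ := by
    by_contra h
    have := Real.log_nonpos hκ0.le (not_le.1 h).le
    linarith
  have hκd : κ ≤ κ ^ d := le_self_pow₀ hκ1 hd.ne'
  have hDd : (D : ℝ) ^ d ≤ 4 ^ d * κ ^ d * z := by
    calc (D : ℝ) ^ d ≤ (4 * κ * z) ^ d := by gcongr
      _ = 4 ^ d * κ ^ d * z ^ d := by rw [mul_pow, mul_pow]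
      _ ≤ _ := by
        gcongr
        exact pow_le_of_le_one hz0.le hz1 hd.ne'
  have hδ2 : 2 * δ' = δ := by rw [hδ']; ring
  rw [← hδ2]
  have he1 : (1 : ℝ) ≤ e := by exact_mod_cast he
  refine poolServes_of_field hW hP hn hε0 hδ0 hR0 hD1 ?_ ?_ h5 ?_
  · rw [one_div, le_inv_mul_iff₀ hn', Real.le_log_iff_exp_le (by positivity), ← hLd]
    calc L ^ d ≤ (D : ℝ) ^ d := by gcongr
      _ ≤ e * D ^ d := le_mul_of_one_le_left (by positivity) he1
      _ ≤ _ := le_mul_of_one_le_right (by positivity) hlog0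
  · rw [div_le_iff₀ hκ0]
    push_cast
    calc (d : ℝ) * D ≤ d * (4 * κ * z) := by gcongr
      _ = 4 * d * z * κ := by ring
      _ ≤ _ := by
        gcongr
        exact (hz' (by positivity) hz0.le).trans h1
  · have t1 : 2 * (e * D ^ d * Real.log κ) ≤ δ' / 4 * κ ^ d := by
      calc 2 * (e * D ^ d * Real.log κ) ≤ 2 * (e * (4 ^ d * κ ^ d * z) * (n * θ)) := by gcongr
        _ = 2 * e * θ * 4 ^ d * (n * z) * κ ^ d := by ring
        _ ≤ 2 * e * θ * 4 ^ d * ((n + 1) * z) * κ ^ d := by gcongr; linarith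
        _ ≤ _ := by gcongr
    have t2 : 2 * (κ ^ d) ^ 2 * (2 * Real.exp (-(n * (mutInf P W - ε)))) ≤ δ' / 4 * κ ^ d := by
      calc _ = 4 * (κ ^ d * Real.exp (-(n * (mutInf P W - ε)))) * κ ^ d := by ring
        _ ≤ 4 * (Real.exp (n * θ) ^ d * Real.exp (-(n * (mutInf P W - ε)))) * κ ^ d := by gcongr
        _ = 4 * Real.exp (-(ε * n)) * κ ^ d := by
          rw [← Real.exp_nat_mul, ← Real.exp_add]
          congr 3
          rw [hε]; ring
        _ ≤ _ := by
          gcongr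
          exact (hz' (by positivity) (Real.exp_pos _).le).trans h2
    have t3 : 4 ≤ δ' * κ ^ d := by
      have := mul_le_mul_of_nonneg_left hκd hδ0.le
      linarith
    linarith

theorem exists_field_card_near_exp {θ : ℝ} (hθ : 0 < θ) :
    ∃ (K : ℕ → Type) (_ : ∀ n, Field (K n)) (_ : ∀ n, Fintype (K n)),
      (∀ᶠ n : ℕ in Filter.atTop, Real.exp (n * θ) ≤ 2 * Fintype.card (K n)) ∧
      ∀ᶠ n : ℕ in Filter.atTop, (Fintype.card (K n) : ℝ) ≤ Real.exp (n * θ) := by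
  have hlog2 : 0 < Real.log 2 := Real.log_pos one_lt_two
  set h : ℕ → ℕ := fun n => ⌊n * θ / Real.log 2⌋₊ with hh
  have h0 : ∀ᶠ n : ℕ in Filter.atTop, h n ≠ 0 := by
    filter_upwards [(tendsto_natCast_atTop_atTop (R := ℝ)).eventually_ge_atTop (Real.log 2 / θ)]
      with n hn
    rw [div_le_iff₀ hθ] at hn
    exact (Nat.floor_pos.2 ((one_le_div hlog2).2 hn)).ne'
  have hpow : ∀ a : ℝ, (2 : ℝ) ^ a = Real.exp (a * Real.log 2) := fun a => by
    rw [Real.rpow_def_of_pos two_pos, mul_comm]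
  refine ⟨fun n => GaloisField 2 (h n), fun n => inferInstance, fun n => Fintype.ofFinite _, ?_, ?_⟩
  all_goals
    filter_upwards [h0] with n hn
    have hc := GaloisField.card 2 (h n) hn
    let := Fintype.ofFinite (GaloisField 2 (h n))
    rw [Nat.card_eq_fintype_card] at hc
    rw [hc]
    push_cast
  · rw [← pow_succ', ← Real.rpow_natCast, hpow]
    apply Real.exp_le_exp.2
    have := Nat.lt_floor_add_one (n * θ / Real.log 2)
    rw [div_lt_iff₀ hlog2] at this
    push_cast
    exact this.le
  · rw [← Real.rpow_natCast, hpow]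
    apply Real.exp_le_exp.2
    have := Nat.floor_le (show 0 ≤ n * θ / Real.log 2 by positivity)
    rwa [le_div_iff₀ hlog2] at this

theorem eventually_poolServes_of_le {X Y : Type*} [Fintype X] [Fintype Y] {W : X → Y → ℝ}
    (hW : IsChannel W) {P : X → ℝ} (hP : IsPMF P) {K : ℕ → Type*} [∀ n, Field (K n)]
    [∀ n, Fintype (K n)] {θ : ℝ} (hθ : 0 < θ)
    (hlow : ∀ᶠ n : ℕ in Filter.atTop, Real.exp (n * θ) ≤ 2 * Fintype.card (K n))
    (hupp : ∀ᶠ n : ℕ in Filter.atTop, (Fintype.card (K n) : ℝ) ≤ Real.exp (n * θ))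
    {δ R : ℝ} {d α : ℕ} (hδ : 0 < δ)
    (h : R = 0 ∧ d = α ∨ 0 < R ∧ d < α ∧ R < d * θ ∧ d * θ < mutInf P W) :
    ∀ᶠ n : ℕ in Filter.atTop, PoolServes n W P (Fin α → K n) δ R
      ((Fintype.card (K n) : ℝ) ^ (α - d))⁻¹ := by
  rcases h with ⟨rfl, rfl⟩ | ⟨hR0, hd, hR, hI⟩
  · refine Filter.Eventually.of_forall fun n => ?_
    simpa using poolServes_zero n (Fin d → K n) hδ.le
  · obtain ⟨e, rfl⟩ := Nat.exists_eq_add_of_le hd.le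
    rw [Nat.add_sub_cancel_left]
    exact eventually_poolServes hW hP hθ hlow hupp (by omega) hδ hR0 hR hI

theorem IDCodeErr.mono {X Y M : Type*} [Fintype X] [Fintype Y] {n : ℕ} {W : X → Y → ℝ}
    {Q : M → (Fin n → X) → ℝ} {D : M → Finset (Fin n → Y)} {a b a' b' : ℝ}
    (h : IDCodeErr n W Q D a b) (ha : a ≤ a') (hb : b ≤ b') : IDCodeErr n W Q D a' b' :=
  ⟨fun m => (h.1 m).trans ha, fun m m' hm => (h.2 m m' hm).trans hb⟩

theorem bc3Achievable_of_dimensions {X Y1 Y2 Y3 : Type*} [Fintype X] [Fintype Y1] [Fintype Y2]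
    [Fintype Y3] {W : X → Y1 → Y2 → Y3 → ℝ} (hW : IsBC3 W) {P : X → ℝ} (hP : IsPMF P)
    {θ R1 R2 R3 : ℝ} (hθ : 0 < θ) {α d1 d2 d3 : ℕ}
    (h1 : R1 = 0 ∧ d1 = α ∨ 0 < R1 ∧ d1 < α ∧ R1 < d1 * θ ∧ d1 * θ < mutInf P (marg1 W))
    (h2 : R2 = 0 ∧ d2 = α ∨ 0 < R2 ∧ d2 < α ∧ R2 < d2 * θ ∧ d2 * θ < mutInf P (marg2 W))
    (h3 : R3 = 0 ∧ d3 = α ∨ 0 < R3 ∧ d3 < α ∧ R3 < d3 * θ ∧ d3 * θ < mutInf P (marg3 W))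
    (hd : 2 * α + 1 ≤ d1 + d2 + d3) : BC3Achievable W (R1, R2, R3) := by
  have nn : ∀ {R I : ℝ} {d : ℕ}, R = 0 ∧ d = α ∨ 0 < R ∧ d < α ∧ R < d * θ ∧ d * θ < I →
      0 ≤ R ∧ d ≤ α := by
    rintro R I d (h | h)
    · exact ⟨h.1.ge, h.2.le⟩
    · exact ⟨h.1.le, h.2.1.le⟩
  refine ⟨(nn h1).1, (nn h2).1, (nn h3).1,
    fun l11 l21 l12 l22 l13 l23 p11 p21 p12 p22 p13 p23 => ?_⟩
  set l := min (min (min l11 l21) (min l12 l22)) (min l13 l23) with hl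
  have hl0 : 0 < l := by simp [*]
  obtain ⟨K, iF, iT, hlow, hupp⟩ := exists_field_card_near_exp hθ
  have hδ : 0 < l / 4 := by positivity
  have s1 := eventually_poolServes_of_le hW.isChannel_marg1 hP hθ hlow hupp hδ h1
  have s2 := eventually_poolServes_of_le hW.isChannel_marg2 hP hθ hlow hupp hδ h2
  have s3 := eventually_poolServes_of_le hW.isChannel_marg3 hP hθ hlow hupp hδ h3
  have s4 := eventually_mul_exp_neg_le (C := 8) hθ (show 0 < l / 2 by positivity)
  rw [← Filter.eventually_atTop]
  filter_upwards [s1, s2, s3, s4, hlow] with n s1 s2 s3 s4 hn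
  have hκ : 1 ≤ (Fintype.card (K n) : ℝ) := by exact_mod_cast Fintype.card_pos (α := K n)
  set κ : ℝ := ((Fintype.card (K n) : ℕ) : ℝ) with hκdef
  obtain ⟨k1, k2, k3, Q, D1, D2, D3, hc, hr⟩ :=
    exists_bc3Code_of_poolServes hW hP hl0 s1 s2 s3 (by
      have hκ4 : 4 / κ ≤ l / 2 := by
        refine le_trans ?_ s4
        rw [div_le_iff₀ (by linarith)]
        have h' : Real.exp (n * θ) * Real.exp (-(θ * n)) = 1 := by
          rw [← Real.exp_add, mul_comm, add_neg_cancel, Real.exp_zero]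
        have hz := Real.exp_pos (-(θ * n))
        have h2 := mul_le_mul_of_nonneg_right hn hz.le
        have h3 : 1 ≤ (n + 1 : ℝ) := by linarith [Nat.cast_nonneg (α := ℝ) n]
        nlinarith [mul_le_mul_of_nonneg_right h3 (mul_pos hz (show 0 < κ by linarith)).le]
      have hle : κ ≤ (κ ^ (α - d1))⁻¹ * (κ ^ (α - d2))⁻¹ * (κ ^ (α - d3))⁻¹
          * (Fintype.card (Fin α → K n) : ℕ) := by
        have e : ((Fintype.card (Fin α → K n) : ℕ) : ℝ) = κ ^ α := by simp [hκdef]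
        rw [e, ← mul_inv, ← mul_inv, le_inv_mul_iff₀ (by positivity), ← pow_add, ← pow_add,
          ← pow_succ]
        refine pow_le_pow_right₀ hκ ?_
        have := (nn h1).2
        have := (nn h2).2
        have := (nn h3).2
        omega
      have : 4 / ((κ ^ (α - d1))⁻¹ * (κ ^ (α - d2))⁻¹ * (κ ^ (α - d3))⁻¹
          * (Fintype.card (Fin α → K n) : ℕ)) ≤ 4 / κ := by gcongr
      linarith)
  refine ⟨k1, k2, k3, Q, D1, D2, D3, ⟨hc.1, hc.2.1.mono ?_ ?_, hc.2.2.1.mono ?_ ?_,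
    hc.2.2.2.mono ?_ ?_⟩, hr⟩ <;> simp [hl]

/-- A receiver with information `I` demands rate `R`, of which the code serves `S`; a receiver
demanding nothing does not restrict the pool, of rate `r`. -/
def ServedRate (R I S r : ℝ) : Prop := R = 0 ∧ S = r ∨ 0 < R ∧ R < S ∧ S < I ∧ S < r

theorem bc3Achievable_of_servedRate {X Y1 Y2 Y3 : Type*} [Fintype X] [Fintype Y1] [Fintype Y2]
    [Fintype Y3] {W : X → Y1 → Y2 → Y3 → ℝ} (hW : IsBC3 W) {P : X → ℝ} (hP : IsPMF P)
    {R1 R2 R3 S1 S2 S3 r : ℝ} (hr : 0 < r) (h1 : ServedRate R1 (mutInf P (marg1 W)) S1 r)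
    (h2 : ServedRate R2 (mutInf P (marg2 W)) S2 r) (h3 : ServedRate R3 (mutInf P (marg3 W)) S3 r)
    (hs : 2 * r < S1 + S2 + S3) : BC3Achievable W (R1, R2, R3) := by
  have large : ∀ {c : ℝ} (b : ℝ), 0 < c → ∀ᶠ j : ℕ in Filter.atTop, b ≤ c * j := fun b hc =>
    (tendsto_natCast_atTop_atTop.const_mul_atTop hc).eventually_ge_atTop b
  have key : ∀ {R I S : ℝ}, ServedRate R I S r → ∀ᶠ j : ℕ in Filter.atTop,
      R = 0 ∧ ⌊S * j⌋₊ = ⌊r * j⌋₊ ∨ 0 < R ∧ ⌊S * j⌋₊ < ⌊r * j⌋₊ ∧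
        R < ⌊S * j⌋₊ * (j : ℝ)⁻¹ ∧ ⌊S * j⌋₊ * (j : ℝ)⁻¹ < I := by
    rintro R I S (⟨rfl, rfl⟩ | ⟨hR, hRS, hSI, hSr⟩)
    · simp
    · filter_upwards [large 1 (sub_pos.2 hRS), large 1 (sub_pos.2 hSr),
        Filter.eventually_gt_atTop 0] with j e1 e2 hj
      have hj' : (0 : ℝ) < j := by exact_mod_cast hj
      have hS : 0 ≤ S * j := by have := hR.trans hRS; positivity
      refine Or.inr ⟨hR, ?_, ?_, ?_⟩
      · rw [Nat.lt_iff_add_one_le, ← Nat.floor_add_one hS]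
        exact Nat.floor_le_floor (by linarith)
      · rw [← div_eq_mul_inv, lt_div_iff₀ hj']
        have := Nat.lt_floor_add_one (S * j)
        linarith
      · refine lt_of_le_of_lt ?_ hSI
        rw [← div_eq_mul_inv, div_le_iff₀ hj']
        exact Nat.floor_le hS
  obtain ⟨j, k1, k2, k3, e, hj⟩ := ((key h1).and ((key h2).and ((key h3).and
    ((large 4 (sub_pos.2 hs)).and (Filter.eventually_gt_atTop 0))))).exists
  have hj' : (0 : ℝ) < j := by exact_mod_cast hj
  refine bc3Achievable_of_dimensions hW hP (inv_pos.2 hj') k1 k2 k3 ?_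
  have := Nat.lt_floor_add_one (S1 * j)
  have := Nat.lt_floor_add_one (S2 * j)
  have := Nat.lt_floor_add_one (S3 * j)
  have := Nat.floor_le (show 0 ≤ r * j by positivity)
  have : (2 * ⌊r * j⌋₊ : ℝ) < ⌊S1 * j⌋₊ + ⌊S2 * j⌋₊ + ⌊S3 * j⌋₊ := by linarith
  exact_mod_cast this

theorem exists_servedRate {R1 R2 R3 I1 I2 I3 : ℝ} (h1 : I1 = 0 ∧ R1 = 0 ∨ 0 < R1 ∧ R1 < I1)
    (h2 : I2 = 0 ∧ R2 = 0 ∨ 0 < R2 ∧ R2 < I2) (h3 : I3 = 0 ∧ R3 = 0 ∨ 0 < R3 ∧ R3 < I3)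
    (t1 : I1 ≤ I2 + I3) (t2 : I2 ≤ I1 + I3) (t3 : I3 ≤ I1 + I2) :
    ∃ r S1 S2 S3, 0 < r ∧ ServedRate R1 I1 S1 r ∧ ServedRate R2 I2 S2 r ∧ ServedRate R3 I3 S3 r ∧
      2 * r < S1 + S2 + S3 := by
  have two : ∀ {R R' I : ℝ}, 0 < R → R < I → R' < I → ∃ s, 0 < s ∧ R < s ∧ R' < s ∧ s < I := by
    intro R R' I h0 h h'
    obtain ⟨s, hs, hs'⟩ := exists_between (max_lt h h')
    have := le_max_left R R'
    have := le_max_right R R'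
    exact ⟨s, by linarith, by linarith, by linarith, hs'⟩
  rcases h1 with ⟨rfl, rfl⟩ | ⟨p1, q1⟩ <;> rcases h2 with ⟨rfl, rfl⟩ | ⟨p2, q2⟩ <;>
    rcases h3 with ⟨rfl, rfl⟩ | ⟨p3, q3⟩
  · exact ⟨1, 1, 1, 1, one_pos, .inl ⟨rfl, rfl⟩, .inl ⟨rfl, rfl⟩, .inl ⟨rfl, rfl⟩, by norm_num⟩
  · linarith
  · linarith
  · obtain ⟨s, s0, sR, sR', sI⟩ := two p2 q2 (show R3 < I2 by linarith)
    exact ⟨3 / 2 * s, 3 / 2 * s, s, s, by linarith, .inl ⟨rfl, rfl⟩,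
      .inr ⟨p2, sR, sI, by linarith⟩, .inr ⟨p3, sR', by linarith, by linarith⟩, by linarith⟩
  · linarith
  · obtain ⟨s, s0, sR, sR', sI⟩ := two p1 q1 (show R3 < I1 by linarith)
    exact ⟨3 / 2 * s, s, 3 / 2 * s, s, by linarith, .inr ⟨p1, sR, sI, by linarith⟩,
      .inl ⟨rfl, rfl⟩, .inr ⟨p3, sR', by linarith, by linarith⟩, by linarith⟩
  · obtain ⟨s, s0, sR, sR', sI⟩ := two p1 q1 (show R2 < I1 by linarith)
    exact ⟨3 / 2 * s, s, s, 3 / 2 * s, by linarith, .inr ⟨p1, sR, sI, by linarith⟩,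
      .inr ⟨p2, sR', by linarith, by linarith⟩, .inl ⟨rfl, rfl⟩, by linarith⟩
  · have ev : ∀ {R I : ℝ}, R < I → ∀ᶠ η : ℝ in nhdsWithin 0 (Set.Ioi 0), R < I - η * I ^ 2 := by
      intro R I h
      have : Filter.Tendsto (fun η : ℝ => I - η * I ^ 2) (nhds 0) (nhds (I - 0 * I ^ 2)) := by
        apply Continuous.tendsto; fun_prop
      refine (this.mono_left nhdsWithin_le_nhds).eventually_const_lt ?_
      simpa using h
    have eσ : ∀ᶠ η : ℝ in nhdsWithin 0 (Set.Ioi 0), η * (I1 + I2 + I3) ≤ 1 / 2 := by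
      have : Filter.Tendsto (fun η : ℝ => η * (I1 + I2 + I3)) (nhds 0)
          (nhds (0 * (I1 + I2 + I3))) := by
        apply Continuous.tendsto; fun_prop
      refine (this.mono_left nhdsWithin_le_nhds).eventually_le_const ?_
      simp
    obtain ⟨η, a1, a2, a3, hσ, hη⟩ := ((ev q1).and ((ev q2).and ((ev q3).and
      (eσ.and self_mem_nhdsWithin)))).exists
    have hη : 0 < η := hη
    have sub : ∀ {x y z : ℝ}, 0 < x → 0 < y → 0 < z → x ≤ y + z → η * (x + y + z) ≤ 1 / 2 →
        x - η * x ^ 2 < (y - η * y ^ 2) + (z - η * z ^ 2) := by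
      intro x y z hx hy hz hxyz h
      have m1 : 0 ≤ (y + z - x) * (1 - η * (x + y + z)) :=
        mul_nonneg (by linarith) (by linarith)
      have m2 : 0 < η * (y * z) := by positivity
      nlinarith
    have i1 : 0 < I1 := by linarith
    have i2 : 0 < I2 := by linarith
    have i3 : 0 < I3 := by linarith
    have b1 := sub i1 i2 i3 t1 hσ
    have b2 := sub i2 i1 i3 t2 (by linarith)
    have b3 := sub i3 i1 i2 t3 (by linarith)
    have c : ∀ {x : ℝ}, 0 < x → x - η * x ^ 2 < x := fun hx => by
      have : 0 < η * _ ^ 2 := mul_pos hη (pow_pos hx 2)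
      linarith
    obtain ⟨r, hr, hr'⟩ := exists_between (show max (max (I1 - η * I1 ^ 2) (I2 - η * I2 ^ 2))
      (I3 - η * I3 ^ 2) < (I1 - η * I1 ^ 2 + (I2 - η * I2 ^ 2) + (I3 - η * I3 ^ 2)) / 2 from
        max_lt (max_lt (by linarith) (by linarith)) (by linarith))
    simp only [max_lt_iff] at hr
    exact ⟨r, _, _, _, by linarith, .inr ⟨p1, a1, c i1, hr.1.1⟩, .inr ⟨p2, a2, c i2, hr.1.2⟩,
      .inr ⟨p3, a3, c i3, hr.2⟩, by linarith⟩

theorem exists_mutInf_ge_of_mem_closure {X Y1 Y2 Y3 : Type} [Fintype X] [Fintype Y1] [Fintype Y2]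
    [Fintype Y3] {W : X → Y1 → Y2 → Y3 → ℝ} (hW : IsBC3 W) {p : ℝ × ℝ × ℝ}
    (hp : p ∈ closure {p : ℝ × ℝ × ℝ | BC3Achievable W p}) :
    ∃ P : X → ℝ, IsPMF P ∧ p.1 ≤ mutInf P (marg1 W) ∧ p.2.1 ≤ mutInf P (marg2 W) ∧
      p.2.2 ≤ mutInf P (marg3 W) := by
  have near : ∀ ε : ℝ, 0 < ε → ∃ P : X → ℝ, IsPMF P ∧ p.1 - ε ≤ mutInf P (marg1 W) ∧
      p.2.1 - ε ≤ mutInf P (marg2 W) ∧ p.2.2 - ε ≤ mutInf P (marg3 W) := by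
    intro ε hε
    obtain ⟨q, hq, hpq⟩ := Metric.mem_closure_iff.1 hp (ε / 2) (by positivity)
    obtain ⟨P, hP, g1, g2, g3⟩ := BC3Achievable.exists_mutInf_ge hW hq (half_pos hε)
    rw [Prod.dist_eq, Prod.dist_eq, max_lt_iff, max_lt_iff, Real.dist_eq, Real.dist_eq,
      Real.dist_eq] at hpq
    have := abs_lt.1 hpq.1
    have := abs_lt.1 hpq.2.1
    have := abs_lt.1 hpq.2.2
    exact ⟨P, hP, by linarith, by linarith, by linarith⟩
  have hne : {P : X → ℝ | IsPMF P}.Nonempty := by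
    obtain ⟨P, hP, -⟩ := near 1 one_pos
    exact ⟨P, hP⟩
  have hcont : ContinuousOn (fun P : X → ℝ => min (min (mutInf P (marg1 W) - p.1)
      (mutInf P (marg2 W) - p.2.1)) (mutInf P (marg3 W) - p.2.2)) {P | IsPMF P} :=
    ContinuousOn.inf (ContinuousOn.inf
      ((continuousOn_mutInf hW.isChannel_marg1).sub continuousOn_const)
      ((continuousOn_mutInf hW.isChannel_marg2).sub continuousOn_const))
      ((continuousOn_mutInf hW.isChannel_marg3).sub continuousOn_const)
  obtain ⟨P, hP, hmax⟩ := (isCompact_isPMF X).exists_isMaxOn hne hcont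
  have h0 : 0 ≤ min (min (mutInf P (marg1 W) - p.1) (mutInf P (marg2 W) - p.2.1))
      (mutInf P (marg3 W) - p.2.2) := by
    refine le_of_forall_pos_le_add fun ε hε => ?_
    obtain ⟨P', hP', g1, g2, g3⟩ := near ε hε
    have h : -ε ≤ min (min (mutInf P' (marg1 W) - p.1) (mutInf P' (marg2 W) - p.2.1))
      (mutInf P' (marg3 W) - p.2.2) := le_min (le_min (by linarith) (by linarith)) (by linarith)
    have := hmax hP'
    simp only [Set.mem_ofPred_eq] at this
    linarith
  simp only [le_min_iff, sub_nonneg] at h0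
  exact ⟨P, hP, h0.1.1, h0.1.2, h0.2⟩

theorem mem_closure_bc3Achievable {X Y1 Y2 Y3 : Type*} [Fintype X] [Fintype Y1] [Fintype Y2]
    [Fintype Y3] {W : X → Y1 → Y2 → Y3 → ℝ} (hW : IsBC3 W) {P : X → ℝ} (hP : IsPMF P)
    (hcap : 2 * max (max (mutInf P (marg1 W)) (mutInf P (marg2 W))) (mutInf P (marg3 W))
      ≤ mutInf P (marg1 W) + mutInf P (marg2 W) + mutInf P (marg3 W)) {p : ℝ × ℝ × ℝ}
    (n1 : 0 ≤ p.1) (n2 : 0 ≤ p.2.1) (n3 : 0 ≤ p.2.2) (h1 : p.1 ≤ mutInf P (marg1 W))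
    (h2 : p.2.1 ≤ mutInf P (marg2 W)) (h3 : p.2.2 ≤ mutInf P (marg3 W)) :
    p ∈ closure {p : ℝ × ℝ × ℝ | BC3Achievable W p} := by
  have i1 := mutInf_nonneg hP hW.isChannel_marg1
  have i2 := mutInf_nonneg hP hW.isChannel_marg2
  have i3 := mutInf_nonneg hP hW.isChannel_marg3
  set I1 := mutInf P (marg1 W) with hI1
  set I2 := mutInf P (marg2 W) with hI2
  set I3 := mutInf P (marg3 W) with hI3
  have m1 : I1 ≤ max (max I1 I2) I3 := (le_max_left _ _).trans (le_max_left _ _)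
  have m2 : I2 ≤ max (max I1 I2) I3 := (le_max_right _ _).trans (le_max_left _ _)
  have m3 : I3 ≤ max (max I1 I2) I3 := le_max_right _ _
  have shrink : ∀ {t x I : ℝ}, 0 < t → t < 1 → 0 ≤ I → 0 ≤ x → x ≤ I →
      I = 0 ∧ (1 - t) * x + t * (I / 2) = 0 ∨
      0 < (1 - t) * x + t * (I / 2) ∧ (1 - t) * x + t * (I / 2) < I := by
    intro t x I t0 t1 hI hx hxI
    rcases hI.eq_or_lt with rfl | hI
    · have : x = 0 := le_antisymm hxI hx
      simp [this]
    · have := mul_pos t0 hI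
      have := mul_nonneg (sub_pos.2 t1).le hx
      have := mul_le_mul_of_nonneg_left hxI (sub_pos.2 t1).le
      exact .inr ⟨by linarith, by linarith⟩
  have hlim : Filter.Tendsto (fun t : ℝ => ((1 - t) * p.1 + t * (I1 / 2),
      (1 - t) * p.2.1 + t * (I2 / 2), (1 - t) * p.2.2 + t * (I3 / 2)))
      (nhdsWithin 0 (Set.Ioi 0)) (nhds p) := by
    have : Continuous (fun t : ℝ => ((1 - t) * p.1 + t * (I1 / 2),
      (1 - t) * p.2.1 + t * (I2 / 2), (1 - t) * p.2.2 + t * (I3 / 2))) := by fun_prop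
    have := this.tendsto 0
    simp only [sub_zero, one_mul, zero_mul, add_zero] at this
    exact this.mono_left nhdsWithin_le_nhds
  refine mem_closure_of_tendsto hlim ?_
  filter_upwards [Ioo_mem_nhdsGT (zero_lt_one' ℝ)] with t ht
  obtain ⟨r, S1, S2, S3, hr, s1, s2, s3, hs⟩ := exists_servedRate (shrink ht.1 ht.2 i1 n1 h1)
    (shrink ht.1 ht.2 i2 n2 h2) (shrink ht.1 ht.2 i3 n3 h3) (by linarith) (by linarith)
    (by linarith)
  exact bc3Achievable_of_servedRate hW hP hr s1 s2 s3 hs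

/-- **Remark 4.** If no receiver is "much more capable" than the
other two, the ID capacity region of the three-receiver BC is the set of rate
triples dominated, for some input PMF `P`, by the three mutual informations. -/
theorem bc3_id_capacity_region_no_much_more_capable
    {X Y1 Y2 Y3 : Type} [Fintype X] [Fintype Y1] [Fintype Y2] [Fintype Y3]
    [Nonempty X] [Nonempty Y1] [Nonempty Y2] [Nonempty Y3]
    (W : X → Y1 → Y2 → Y3 → ℝ) (hW : IsBC3 W)
    (hcap : ∀ P : X → ℝ, IsPMF P →
      2 * max (max (mutInf P (marg1 W)) (mutInf P (marg2 W))) (mutInf P (marg3 W))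
        ≤ mutInf P (marg1 W) + mutInf P (marg2 W) + mutInf P (marg3 W)) :
    closure {p : ℝ × ℝ × ℝ | BC3Achievable W p}
      = {p : ℝ × ℝ × ℝ | 0 ≤ p.1 ∧ 0 ≤ p.2.1 ∧ 0 ≤ p.2.2 ∧
          ∃ P : X → ℝ, IsPMF P ∧
            p.1 ≤ mutInf P (marg1 W) ∧
            p.2.1 ≤ mutInf P (marg2 W) ∧
            p.2.2 ≤ mutInf P (marg3 W)} := by
  ext p
  constructor
  · intro hp
    have hcl : IsClosed (Set.Ici (0 : ℝ × ℝ × ℝ)) := isClosed_Ici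
    have hsub : {p : ℝ × ℝ × ℝ | BC3Achievable W p} ⊆ Set.Ici 0 := fun q hq =>
      show 0 ≤ q from ⟨hq.1, hq.2.1, hq.2.2.1⟩
    obtain ⟨h1, h2, h3⟩ := closure_minimal hsub hcl hp
    exact ⟨h1, h2, h3, exists_mutInf_ge_of_mem_closure hW hp⟩
  · rintro ⟨n1, n2, n3, P, hP, h1, h2, h3⟩
    exact mem_closure_bc3Achievable hW hP (hcap P hP) n1 n2 n3 h1 h2 h3
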